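/- arXiv:1803.01338 — 2 statements merged into one kernel-verified Lean document; each statement's English description precedes it below -/
import Mathlib

section
/- Let d = (d_1,…,d_n) be a graphical degree sequence with minimum entry δ and maximum entry Δ, and let m be defined by 2m = Σ_i d_i. If (2m − nδ)(nΔ − 2m) ≤ (Δ − δ)·[(2m − nδ)(n − Δ − 1) + (nΔ − 2m)δ], then k_JS(d) ≤ 6; that is, every graph in G'(d) can be transformed into an element of G(d) by at most 6 JS-adjacent steps within G'(d). -/
/-!
A graph in `G'(d)` that is not a realization has exactly two units of deficit, located at vertices `s`
and `t`, possibly equal (`exists_Dfc`). An alternating trail from `s` to `t` that begins and ends with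
a non-edge and has `r` edges is a recipe for `r + 1` moves ending in a realization
(`reach_of_trail`). If `s` and `t` are distinct and not adjacent, one move suffices; if they are
adjacent but some vertex is joined to only one of them, one move reaches a graph with both units of
deficit at one vertex. It therefore remains to show that five moves suffice when `s = t` or when `s`
and `t` are adjacent twins.

Suppose not, so that there is no alternating trail with at most four edges (`Stuck`). Then the
non-neighbours `j` of `s` are independent, and excluding trails with two, three and four edges
describes the graph near `s`: a clique-like part `D`, containing `s` and the neighbours of the `j`, and
a part `O`, containing the `j`, whose vertices have all their neighbours in `D`. There are two
cases. In the first (`Stuck.false_of_clique`), the neighbours of each `j` form a clique; then `O`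
also contains the ends of two compatible walks `s | j ~ k | x` (`Dbl`). In the second
(`Stuck.false_of_not_clique`), `s = t` and one `j` has two non-adjacent neighbours; then `s j` is added
as an edge and `O` consists of all vertices that some neighbour of the remaining non-neighbours of
`s`, or `s` itself, misses.

Such a configuration almost violates the Erdős–Gallai inequality for the set `D`, or for the set of
those vertices that are complete to `D`. Counting the entries of the corresponding rows of the
adjacency matrix (`count_contra`) gives estimates for `|D|` and `|O|` which contradict the
hypothesis on `n`, `m`, `δ` and `Δ` (`numeric_one`, `numeric_two`).
-/

open SimpleGraph
open scoped symmDiff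

/-- The degree of vertex `v` in graph `G`. -/
noncomputable def deg {n : ℕ} (G : SimpleGraph (Fin n)) (v : Fin n) : ℕ :=
  (G.neighborSet v).ncard

/-- `G ∈ 𝒢(d)`: vertex `i` has degree `d i` for every `i`. -/
def memG {n : ℕ} (d : Fin n → ℕ) (G : SimpleGraph (Fin n)) : Prop :=
  ∀ v, deg G v = d v

/-- `G ∈ 𝒢'(d)`: the degree sequence of `G` is componentwise at most `d`,
with total deficit at most `2`. -/
def memG' {n : ℕ} (d : Fin n → ℕ) (G : SimpleGraph (Fin n)) : Prop :=
  (∀ v, deg G v ≤ d v) ∧ ∑ v, (d v - deg G v) ≤ 2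

/-- A single (directed) move of the Jerrum–Sinclair chain from `G` to `H`:
Type 0 (delete an edge when `G ∈ 𝒢(d)`), Type 2 (add an edge between two
deficient vertices), or Type 1 (add an edge to a deficient vertex and delete
an edge at the other endpoint). -/
def jsStep {n : ℕ} (d : Fin n → ℕ) (G H : SimpleGraph (Fin n)) : Prop :=
  (memG d G ∧ ∃ u v : Fin n, G.Adj u v ∧ H = G.deleteEdges {s(u, v)}) ∨
  (¬ memG d G ∧ ∃ i j : Fin n, i ≠ j ∧ ¬ G.Adj i j ∧ deg G i < d i ∧ deg G j < d j ∧
      H = G ⊔ fromEdgeSet {s(i, j)}) ∨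
  (¬ memG d G ∧ ∃ i j k : Fin n, i ≠ j ∧ ¬ G.Adj i j ∧ deg G i < d i ∧ deg G j = d j ∧
      G.Adj j k ∧ H = (G ⊔ fromEdgeSet {s(i, j)}).deleteEdges {s(j, k)})

/-- `G` and `H` are JS adjacent. -/
def jsAdj {n : ℕ} (d : Fin n → ℕ) (G H : SimpleGraph (Fin n)) : Prop :=
  jsStep d G H ∨ jsStep d H G

/-- There is a walk of exactly `m` JS-adjacent steps from `G` to `H`, all of
whose states lie in `𝒢'(d)`. -/
def jsChain {n : ℕ} (d : Fin n → ℕ) (m : ℕ) (G H : SimpleGraph (Fin n)) : Prop :=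
  ∃ f : ℕ → SimpleGraph (Fin n), f 0 = G ∧ f m = H ∧
    (∀ i ≤ m, memG' d (f i)) ∧ (∀ i < m, jsAdj d (f i) (f (i+1)))

/-- The JS distance between `G` and `H` (within `𝒢'(d)`) is at most `k`. -/
def jsDistLe {n : ℕ} (d : Fin n → ℕ) (k : ℕ) (G H : SimpleGraph (Fin n)) : Prop :=
  ∃ m ≤ k, jsChain d m G H

/-! ### Deficits and single moves -/

/-- `Dfc d G a b`: the degrees of `G` fall short of `d` by exactly one unit at `a` and one unit
at `b` (two units at `a` if `a = b`). -/
def Dfc {n : ℕ} (d : Fin n → ℕ) (G : SimpleGraph (Fin n)) (a b : Fin n) : Prop :=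
  ∀ v, (deg G v : ℤ) + (if v = a then 1 else 0) + (if v = b then 1 else 0) = d v

/-- `Reach d r G`: some realization of `d` is at JS distance at most `r` from `G`. -/
def Reach {n : ℕ} (d : Fin n → ℕ) (r : ℕ) (G : SimpleGraph (Fin n)) : Prop :=
  ∃ H : SimpleGraph (Fin n), memG d H ∧ jsDistLe d r G H

open Classical in
theorem deg_eq_sum {n : ℕ} (G : SimpleGraph (Fin n)) (v : Fin n) :
    (deg G v : ℤ) = ∑ u, if G.Adj v u then (1 : ℤ) else 0 := by
  unfold deg
  rw [Set.ncard_eq_toFinset_card', Finset.sum_boole]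
  congr 2
  ext u
  simp

theorem deg_eq_degree {n : ℕ} (G : SimpleGraph (Fin n)) [DecidableRel G.Adj] (v : Fin n) :
    deg G v = G.degree v := by
  unfold deg
  rw [Set.ncard_eq_toFinset_card', ← SimpleGraph.card_neighborFinset_eq_degree]
  rfl

theorem memG'_of_memG {n : ℕ} {d : Fin n → ℕ} {G : SimpleGraph (Fin n)} (h : memG d G) :
    memG' d G :=
  ⟨fun v => (h v).le, by simp [h _]⟩

theorem memG'_of_Dfc {n : ℕ} {d : Fin n → ℕ} {G : SimpleGraph (Fin n)} {a b : Fin n}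
    (h : Dfc d G a b) : memG' d G := by
  have hle : ∀ v, deg G v ≤ d v := fun v => by have := h v; split_ifs at this <;> omega
  refine ⟨hle, ?_⟩
  zify
  have : ∀ v, ((d v - deg G v : ℕ) : ℤ) = (if v = a then 1 else 0) + (if v = b then 1 else 0) := by
    intro v
    have := h v
    rw [Nat.cast_sub (hle v)]; linarith
  simp [this, Finset.sum_add_distrib]

theorem not_memG_of_Dfc {n : ℕ} {d : Fin n → ℕ} {G : SimpleGraph (Fin n)} {a b : Fin n}
    (h : Dfc d G a b) : ¬ memG d G := by
  intro hG
  have h1 := h a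
  have h2 := hG a
  split_ifs at h1 <;> omega

theorem Dfc.symm {n : ℕ} {d : Fin n → ℕ} {G : SimpleGraph (Fin n)} {a b : Fin n}
    (h : Dfc d G a b) : Dfc d G b a := fun v => by rw [← h v]; ring

theorem Reach.mono {n : ℕ} {d : Fin n → ℕ} {G : SimpleGraph (Fin n)} {r r' : ℕ} (hr : r ≤ r')
    (h : Reach d r G) : Reach d r' G := by
  obtain ⟨H, hH, k, hk, hc⟩ := h
  exact ⟨H, hH, k, hk.trans hr, hc⟩

theorem Reach.zero {n : ℕ} {d : Fin n → ℕ} {G : SimpleGraph (Fin n)} (h : memG d G) :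
    Reach d 0 G :=
  ⟨G, h, 0, le_rfl, fun _ => G, rfl, rfl, fun _ _ => memG'_of_memG h, fun i hi => by omega⟩

theorem Reach.step {n : ℕ} {d : Fin n → ℕ} {G G₁ : SimpleGraph (Fin n)} {r : ℕ}
    (hG : memG' d G) (hs : jsAdj d G G₁) (h : Reach d r G₁) : Reach d (r + 1) G := by
  obtain ⟨H, hH, k, hk, f, h0, hk', hm, ha⟩ := h
  refine ⟨H, hH, k + 1, by omega, fun i => Nat.casesOn i G f, rfl, hk', ?_, ?_⟩
  · rintro (_ | i) hi
    · exact hG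
    · exact hm i (by omega)
  · rintro (_ | i) hi
    · simpa [h0] using hs
    · exact ha i (by omega)

/-- A graph with degree deficit is deficient at exactly two vertices (counted with multiplicity),
because the total deficit is even. -/
theorem exists_Dfc {n : ℕ} {d : Fin n → ℕ} {m : ℕ} (hm : 2 * m = ∑ v, d v)
    {G : SimpleGraph (Fin n)} (hG : memG' d G) (h : ¬ memG d G) : ∃ a b, Dfc d G a b := by
  classical
  obtain ⟨hle, hs⟩ := hG
  have heven : ∑ v, (deg G v : ℤ) = 2 * (G.edgeFinset.card : ℤ) := by
    have := G.sum_degrees_eq_twice_card_edges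
    simp only [deg_eq_degree]
    exact_mod_cast this
  have hs' : ∑ v, ((d v : ℤ) - deg G v) ≤ 2 := by
    zify at hs
    convert hs using 2 with v
    rw [Nat.cast_sub (hle v)]
  have htot : ∑ v, ((d v : ℤ) - deg G v) = 2 * (m : ℤ) - 2 * (G.edgeFinset.card : ℤ) := by
    rw [Finset.sum_sub_distrib, heven]
    have : (2 * m : ℤ) = ∑ v, (d v : ℤ) := by exact_mod_cast hm
    rw [this]
  unfold memG at h
  push Not at h
  obtain ⟨a, ha⟩ := h
  have hea : 1 ≤ (d a : ℤ) - deg G a := by have := hle a; omega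
  set e : Fin n → ℤ := fun v => (d v : ℤ) - deg G v - if v = a then 1 else 0 with he
  have he0 : ∀ v, 0 ≤ e v := by
    intro v
    simp only [he]
    split_ifs with hv
    · subst hv; omega
    · have := hle v; omega
  have hse : ∑ v, e v = ∑ v, ((d v : ℤ) - deg G v) - 1 := by
    simp [he, Finset.sum_sub_distrib]
  -- the remaining deficit is odd and at most one, hence equal to one
  have hse1 : ∑ v, e v = 1 := by
    have := Finset.sum_nonneg (s := Finset.univ) (fun v _ => he0 v)
    omega
  obtain ⟨b, hb⟩ : ∃ b, 1 ≤ e b := by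
    by_contra hcon
    push Not at hcon
    have : ∑ v, e v ≤ 0 := Finset.sum_nonpos (fun v _ => by have := hcon v; omega)
    omega
  have hz : ∑ v, (e v - if v = b then 1 else 0) = 0 := by
    simp [Finset.sum_sub_distrib, hse1]
  rw [Finset.sum_eq_zero_iff_of_nonneg] at hz
  · refine ⟨a, b, fun v => ?_⟩
    have := hz v (Finset.mem_univ v)
    simp only [he] at this
    linarith
  · intro v _
    split_ifs with hv
    · subst hv; omega
    · have := he0 v; omega

theorem sum_pair_indicator {n : ℕ} {i j : Fin n} (hij : i ≠ j) (v : Fin n) :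
    ∑ u, (if s(v, u) = s(i, j) then (1 : ℤ) else 0) =
      (if v = i then 1 else 0) + (if v = j then 1 else 0) := by
  have : ∀ u, (if s(v, u) = s(i, j) then (1 : ℤ) else 0) =
      (if u = j then (if v = i then 1 else 0) else 0) +
        (if u = i then (if v = j then 1 else 0) else 0) := by
    intro u
    simp only [Sym2.eq_iff]
    grind
  rw [Finset.sum_congr rfl fun u _ => this u]
  simp [Finset.sum_add_distrib]

theorem deg_add {n : ℕ} {G : SimpleGraph (Fin n)} {i j : Fin n} (hij : i ≠ j)
    (hadj : ¬ G.Adj i j) (v : Fin n) :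
    (deg (G ⊔ fromEdgeSet {s(i, j)}) v : ℤ) =
      deg G v + (if v = i then 1 else 0) + (if v = j then 1 else 0) := by
  classical
  rw [deg_eq_sum, deg_eq_sum, add_assoc, ← sum_pair_indicator hij v, ← Finset.sum_add_distrib]
  refine Finset.sum_congr rfl fun u _ => ?_
  simp only [sup_adj, fromEdgeSet_adj, Set.mem_singleton_iff, Sym2.eq_iff]
  have := G.adj_comm i j
  grind

theorem deg_delete {n : ℕ} {G : SimpleGraph (Fin n)} {j k : Fin n}
    (hadj : G.Adj j k) (v : Fin n) :
    (deg (G.deleteEdges {s(j, k)}) v : ℤ) =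
      deg G v - (if v = j then 1 else 0) - (if v = k then 1 else 0) := by
  classical
  rw [deg_eq_sum, deg_eq_sum, sub_sub, ← sum_pair_indicator hadj.ne v, ← Finset.sum_sub_distrib]
  refine Finset.sum_congr rfl fun u _ => ?_
  simp only [deleteEdges_adj, Set.mem_singleton_iff, Sym2.eq_iff]
  have := G.adj_comm j k
  grind

/-- Joining the two deficient vertices by an edge completes `G`. -/
theorem reach_of_join {n : ℕ} {d : Fin n → ℕ} {G : SimpleGraph (Fin n)} {a b : Fin n}
    (h : Dfc d G a b) (hne : a ≠ b) (hadj : ¬ G.Adj a b) : Reach d 1 G := by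
  refine Reach.step (memG'_of_Dfc h) (Or.inl (Or.inr (Or.inl
    ⟨not_memG_of_Dfc h, a, b, hne, hadj, ?_, ?_, rfl⟩))) (Reach.zero ?_)
  · have := h a; simp [hne] at this; omega
  · have := h b; simp [hne.symm] at this; omega
  · intro v
    have h1 := deg_add hne hadj v
    have h2 := h v
    omega

/-- One Type 1 move along a non-edge `a j` and an edge `j k` transports a unit of deficit from `a`
to `k`. If `j` is itself deficient, then `G` can be completed at once. -/
theorem reach_of_move {n : ℕ} {d : Fin n → ℕ} {G : SimpleGraph (Fin n)} {a b j k : Fin n} {r : ℕ}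
    (h : Dfc d G a b) (hne : a ≠ j) (hadj : ¬ G.Adj a j) (hjk : G.Adj j k)
    (hr : Dfc d ((G ⊔ fromEdgeSet {s(a, j)}).deleteEdges {s(j, k)}) k b →
      Reach d r ((G ⊔ fromEdgeSet {s(a, j)}).deleteEdges {s(j, k)})) :
    Reach d (r + 1) G := by
  by_cases hjb : j = b
  · subst hjb
    exact (reach_of_join h hne hadj).mono (by omega)
  · have hjk' : (G ⊔ fromEdgeSet {s(a, j)}).Adj j k := Or.inl hjk
    have hD : Dfc d ((G ⊔ fromEdgeSet {s(a, j)}).deleteEdges {s(j, k)}) k b := by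
      intro v
      have h1 := deg_add hne hadj v
      have h2 := deg_delete hjk' v
      have h3 := h v
      omega
    refine Reach.step (memG'_of_Dfc h) (Or.inl (Or.inr (Or.inr
      ⟨not_memG_of_Dfc h, a, j, k, hne, hadj, ?_, ?_, hjk, rfl⟩))) (hr hD)
    · have := h a; split_ifs at this <;> omega
    · have := h j; simp [hne.symm, hjb] at this; omega

/-! ### Alternating trails -/

/-- The non-edges of the alternating walk `a | j₁ ~ k₁ | j₂ ~ k₂ | ⋯ | b` coded by its start `a`,
the list of its edges `(jᵢ, kᵢ)` and its end `b`. -/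
def nonEdges {n : ℕ} : Fin n → List (Fin n × Fin n) → Fin n → List (Sym2 (Fin n))
  | a, [], b => [s(a, b)]
  | a, (j, k) :: l, b => s(a, j) :: nonEdges k l b

/-- The edges of the alternating walk coded by the list of pairs `(jᵢ, kᵢ)`. -/
def walkEdges {n : ℕ} (l : List (Fin n × Fin n)) : List (Sym2 (Fin n)) :=
  l.map fun p => s(p.1, p.2)

/-- An alternating trail between the two deficient vertices, starting and ending with a non-edge
and containing `r` edges, completes `G` within `r + 1` moves. -/
theorem reach_of_trail {n : ℕ} {d : Fin n → ℕ} (b : Fin n) (l : List (Fin n × Fin n)) :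
    ∀ (G : SimpleGraph (Fin n)) (a : Fin n), Dfc d G a b →
      (∀ e ∈ nonEdges a l b, ¬ e.IsDiag ∧ e ∉ G.edgeSet) → (∀ e ∈ walkEdges l, e ∈ G.edgeSet) →
      (nonEdges a l b).Nodup → (walkEdges l).Nodup → Reach d (l.length + 1) G := by
  induction l with
  | nil =>
    intro G a h hn _ _ _
    have := hn s(a, b) (by simp [nonEdges])
    exact reach_of_join h (by simpa using this.1) (by simpa using this.2)
  | cons p l ih =>
    obtain ⟨j, k⟩ := p
    intro G a h hn he hnn hen
    simp only [nonEdges, List.mem_cons, forall_eq_or_imp, List.nodup_cons, walkEdges,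
      List.map_cons, Sym2.mk_isDiag_iff, mem_edgeSet] at hn he hnn hen
    refine reach_of_move h hn.1.1 hn.1.2 he.1 fun hD => ih _ _ hD ?_ ?_ hnn.2 hen.2
    · intro e hmem
      refine ⟨(hn.2 e hmem).1, ?_⟩
      rw [edgeSet_deleteEdges, edgeSet_sup]
      rintro ⟨h1 | h1, _⟩
      · exact (hn.2 e hmem).2 h1
      · simp only [edgeSet_fromEdgeSet] at h1
        have : e = s(a, j) := h1.1
        exact hnn.1 (this ▸ hmem)
    · intro e hmem
      rw [edgeSet_deleteEdges, edgeSet_sup]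
      refine ⟨Or.inl (he.2 e hmem), ?_⟩
      intro h1
      have : e = s(j, k) := h1
      exact hen.1 (this ▸ hmem)

/-- If no realization lies within distance five, then no alternating trail with at most four edges
connects the deficient vertices. In the comments below, such a trail is displayed as
`s | j₁ ~ k₁ | j₂ ~ k₂ | ⋯ | t`, with `|` for a non-edge and `~` for an edge. -/
theorem no_trail {n : ℕ} {d : Fin n → ℕ} {G : SimpleGraph (Fin n)} {s t : Fin n}
    (h : Dfc d G s t) (hN : ¬ Reach d 5 G) (l : List (Fin n × Fin n)) (hl : l.length ≤ 4)
    (h1 : ∀ e ∈ nonEdges s l t, e ∈ Gᶜ.edgeSet) (h2 : ∀ e ∈ walkEdges l, e ∈ G.edgeSet)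
    (h3 : (nonEdges s l t).Nodup) (h4 : (walkEdges l).Nodup) : False := by
  refine hN ((reach_of_trail t l G s h (fun e he => ?_) h2 h3 h4).mono (by omega))
  have := h1 e he
  induction e with
  | _ x y =>
    rw [mem_edgeSet, compl_adj] at this
    exact ⟨by simpa using this.1, by simpa using this.2⟩

section Trails

variable {n : ℕ} {d : Fin n → ℕ} {G : SimpleGraph (Fin n)} {s t : Fin n}

/-- Excludes the trail `s | j ~ k | t`. -/
theorem no_trail_one (h : Dfc d G s t) (hN : ¬ Reach d 5 G) {j k : Fin n}
    (h1 : Gᶜ.Adj s j) (e1 : G.Adj j k) (h2 : Gᶜ.Adj k t) : False := by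
  rw [compl_adj] at h1 h2
  have a1 := e1.ne
  have a2 := e1.symm
  refine no_trail h hN [(j, k)] (by simp) ?_ ?_ ?_ ?_ <;>
    (simp [nonEdges, walkEdges, *]; try grind)

/-- Excludes the trail `s | j₁ ~ k₁ | j₂ ~ k₂ | t`. -/
theorem no_trail_two (h : Dfc d G s t) (hN : ¬ Reach d 5 G) {j₁ k₁ j₂ k₂ : Fin n}
    (h1 : Gᶜ.Adj s j₁) (e1 : G.Adj j₁ k₁) (h2 : Gᶜ.Adj k₁ j₂) (e2 : G.Adj j₂ k₂)
    (h3 : Gᶜ.Adj k₂ t) (hn : [s(s, j₁), s(k₁, j₂), s(k₂, t)].Nodup)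
    (he : [s(j₁, k₁), s(j₂, k₂)].Nodup) : False :=
  no_trail h hN [(j₁, k₁), (j₂, k₂)] (by simp) (by simp [nonEdges, *, -compl_adj])
    (by simp [walkEdges, *]) hn he

/-- Excludes the trail `s | j₁ ~ k₁ | j₂ ~ k₂ | j₃ ~ k₃ | t`. -/
theorem no_trail_three (h : Dfc d G s t) (hN : ¬ Reach d 5 G) {j₁ k₁ j₂ k₂ j₃ k₃ : Fin n}
    (h1 : Gᶜ.Adj s j₁) (e1 : G.Adj j₁ k₁) (h2 : Gᶜ.Adj k₁ j₂) (e2 : G.Adj j₂ k₂)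
    (h3 : Gᶜ.Adj k₂ j₃) (e3 : G.Adj j₃ k₃) (h4 : Gᶜ.Adj k₃ t)
    (hn : [s(s, j₁), s(k₁, j₂), s(k₂, j₃), s(k₃, t)].Nodup)
    (he : [s(j₁, k₁), s(j₂, k₂), s(j₃, k₃)].Nodup) : False :=
  no_trail h hN [(j₁, k₁), (j₂, k₂), (j₃, k₃)] (by simp) (by simp [nonEdges, *, -compl_adj])
    (by simp [walkEdges, *]) hn he

/-- Excludes the trail `s | j₁ ~ k₁ | j₂ ~ k₂ | j₃ ~ k₃ | j₄ ~ k₄ | t`. -/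
theorem no_trail_four (h : Dfc d G s t) (hN : ¬ Reach d 5 G) {j₁ k₁ j₂ k₂ j₃ k₃ j₄ k₄ : Fin n}
    (h1 : Gᶜ.Adj s j₁) (e1 : G.Adj j₁ k₁) (h2 : Gᶜ.Adj k₁ j₂) (e2 : G.Adj j₂ k₂)
    (h3 : Gᶜ.Adj k₂ j₃) (e3 : G.Adj j₃ k₃) (h4 : Gᶜ.Adj k₃ j₄) (e4 : G.Adj j₄ k₄)
    (h5 : Gᶜ.Adj k₄ t) (hn : [s(s, j₁), s(k₁, j₂), s(k₂, j₃), s(k₃, j₄), s(k₄, t)].Nodup)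
    (he : [s(j₁, k₁), s(j₂, k₂), s(j₃, k₃), s(j₄, k₄)].Nodup) : False :=
  no_trail h hN [(j₁, k₁), (j₂, k₂), (j₃, k₃), (j₄, k₄)] (by simp)
    (by simp [nonEdges, *, -compl_adj]) (by simp [walkEdges, *]) hn he

end Trails

/-! ### Arithmetic -/

/-- The first arithmetic consequence of the degree condition. Here `p` counts rows and `q` columns of
an adjacency matrix, `M` is the sum of all degrees, and `S` is the sum of the entries in `p` rows and
`q` columns; the remaining entries of these rows off the diagonal are filled up to `1`. Writing
`X = M - n δ`, `Y = n Δ - M`, `E = Δ - δ` and `c = n - Δ - 1`, the degree condition is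
`(X - δ E) (Y - c E) ≤ δ c E ^ 2`, while the other hypotheses force the reverse strict inequality. The
bounds `q δ ≤ S` and `M - (n - q) Δ ≤ S` are used according to whether `q E ≤ Y`. -/
theorem numeric_one {n p q δ Δ M S : ℤ} (hpδ : δ + 1 ≤ p) (hpΔ : p ≤ Δ) (hδ : 0 ≤ δ)
    (hΔn : Δ ≤ n - 1) (hq : n - Δ ≤ q)
    (hineq : (M - n * δ) * (n * Δ - M) ≤
      (Δ - δ) * ((M - n * δ) * (n - Δ - 1) + (n * Δ - M) * δ))
    (hp : p * (Δ - δ) ≤ M - n * δ)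
    (h : p * (n - q - 1) + S ≤ p * Δ - 1) (hS1 : q * δ ≤ S) (hS2 : M - (n - q) * Δ ≤ S) :
    False := by
  obtain ⟨E, hE⟩ : ∃ E, E = Δ - δ := ⟨_, rfl⟩
  obtain ⟨c, hc⟩ : ∃ c, c = n - Δ - 1 := ⟨_, rfl⟩
  obtain ⟨X, hX⟩ : ∃ X, X = M - n * δ := ⟨_, rfl⟩
  obtain ⟨Y, hY⟩ : ∃ Y, Y = n * Δ - M := ⟨_, rfl⟩
  rw [← hE, ← hc, ← hX, ← hY] at hineq
  rw [← hE, ← hX] at hp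
  have hE0 : 0 < E := by omega
  have hc0 : 0 ≤ c := by omega
  have hcq : 0 < q - c := by omega
  have hkey : (X - δ * E) * (Y - c * E) ≤ δ * c * E ^ 2 := by nlinarith
  have hX0 : 0 < X - δ * E := by nlinarith
  rcases le_total (q * E) Y with hqY | hqY
  · have h1 : p * (q - c) - q * δ ≥ 1 := by
      have : p * (n - q - 1) - p * Δ = p * (c - q) := by rw [hc]; ring
      nlinarith
    have h2 : (E * (p - δ)) * (E * (q - c)) ≤ (X - δ * E) * (Y - c * E) := by
      apply mul_le_mul <;> nlinarith
    have h3 : E ^ 2 * (p * (q - c) - q * δ) ≤ 0 := by nlinarith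
    nlinarith [sq_nonneg E, pow_pos hE0 2]
  · have h1 : p * (c - q) + q * Δ - Y ≤ -1 := by
      rw [hc, hY]; nlinarith
    have h2 : (Δ - p) * Y ≤ (Δ - p) * (q * E) := mul_le_mul_of_nonneg_left hqY (by omega)
    have h3 : p * c * E - (p - δ) * Y < 0 := by
      have : E * (p * (c - q) + q * Δ - Y) < 0 := by nlinarith
      have e1 : E * (p * (c - q) + q * Δ - Y) = p * c * E + (Δ - p) * (q * E) - E * Y := by ring
      have e2 : (Δ - p) * Y - E * Y = -((p - δ) * Y) := by rw [hE]; ring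
      linarith
    have h4 : δ * c * E < (p - δ) * (Y - c * E) := by nlinarith
    have h5 : 0 ≤ δ * c * E := by positivity
    have h6 : 0 < Y - c * E := by
      by_contra hcon
      nlinarith
    have h7 : (E * (p - δ)) * (Y - c * E) ≤ (X - δ * E) * (Y - c * E) := by
      apply mul_le_mul_of_nonneg_right _ h6.le
      nlinarith
    nlinarith

/-- The counterpart of `numeric_one` for a large number `p` of rows, where `p Δ` is replaced by the
bound `M - (n - p) δ` on the sum of `p` of the degrees. -/
theorem numeric_two {n p q δ Δ M : ℤ} (hpδ : δ + 1 ≤ p) (hpΔ : p ≤ Δ) (hδ : 0 ≤ δ)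
    (hΔn : Δ ≤ n - 1) (hq : n - Δ ≤ q) (hpq : p + q ≤ n)
    (hineq : (M - n * δ) * (n * Δ - M) ≤
      (Δ - δ) * ((M - n * δ) * (n - Δ - 1) + (n * Δ - M) * δ))
    (hp : M - n * δ ≤ p * (Δ - δ))
    (h : p * (n - q - 1) + q * δ ≤ M - (n - p) * δ - 1) :
    False := by
  obtain ⟨E, hE⟩ : ∃ E, E = Δ - δ := ⟨_, rfl⟩
  obtain ⟨c, hc⟩ : ∃ c, c = n - Δ - 1 := ⟨_, rfl⟩
  obtain ⟨X, hX⟩ : ∃ X, X = M - n * δ := ⟨_, rfl⟩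
  obtain ⟨Y, hY⟩ : ∃ Y, Y = n * Δ - M := ⟨_, rfl⟩
  rw [← hE, ← hc, ← hX, ← hY] at hineq
  rw [← hE, ← hX] at hp
  have hE0 : 0 < E := by omega
  have hc0 : 0 ≤ c := by omega
  have hcq : 0 < q - c := by omega
  have hkey : (X - δ * E) * (Y - c * E) ≤ δ * c * E ^ 2 := by nlinarith
  have h1 : p * (n - q - 1 - δ) + q * δ ≤ X - 1 := by rw [hX]; nlinarith
  have h2 : X * (n - q - 1 - δ) ≤ p * E * (n - q - 1 - δ) :=
    mul_le_mul_of_nonneg_right hp (by omega)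
  have h3 : X * (c - q) + q * δ * E < 0 := by
    have e1 : X * (n - q - 1 - δ) = X * (c - q) + X * E := by rw [hc, hE]; ring
    have : E * (p * (n - q - 1 - δ) + q * δ) ≤ E * (X - 1) :=
      mul_le_mul_of_nonneg_left h1 hE0.le
    nlinarith
  have h4 : δ * c * E < (X - δ * E) * (q - c) := by nlinarith
  have h5 : 0 ≤ δ * c * E := by positivity
  have h6 : 0 < X - δ * E := by
    by_contra hcon
    nlinarith
  have hqY : q * E ≤ Y := by
    have e1 : X + Y = n * E := by rw [hX, hY, hE]; ring
    nlinarith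
  have h7 : (X - δ * E) * (E * (q - c)) ≤ (X - δ * E) * (Y - c * E) := by
    apply mul_le_mul_of_nonneg_left _ h6.le
    nlinarith
  nlinarith

/-! ### Counting entries of the adjacency matrix -/

open Classical in
/-- The structure found around a stuck vertex `s` is incompatible with the degree condition. The
vertices split into `D`, which contains a subclique `K` complete to `D` and in which no degree is
excessive, into `O`, in which no degree is deficient and all of whose neighbours lie in `D`, and into
the rest. The rows of `D`, with all entries outside the columns of `O` filled up to `1`, still have
sums at most `Δ`, and strictly less for `s`; on the other hand, the columns of `O` restricted to `D`
are full columns of the adjacency matrix. If `|D| (Δ - δ)` is at most `2 m - n δ`, this contradicts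
`numeric_one`. Otherwise the same count is carried out for the set `T` of the vertices complete to
`D`, where each column of `O` still contributes `δ`; if `|T| (Δ - δ)` also exceeds `2 m - n δ`, the sum
of the degrees over `T` is estimated from both sides and contradicts `numeric_two`. -/
theorem count_contra {n : ℕ} (d : Fin n → ℕ) (δ Δ m : ℕ)
    (hδle : ∀ v, δ ≤ d v) (hΔle : ∀ v, d v ≤ Δ) (hΔn : Δ + 1 ≤ n)
    (hm : 2 * m = ∑ v, d v)
    (hineq : (2 * (m : ℤ) - (n : ℤ) * (δ : ℤ)) * ((n : ℤ) * (Δ : ℤ) - 2 * (m : ℤ)) ≤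
      ((Δ : ℤ) - (δ : ℤ)) *
        ((2 * (m : ℤ) - (n : ℤ) * (δ : ℤ)) * ((n : ℤ) - (Δ : ℤ) - 1) +
          ((n : ℤ) * (Δ : ℤ) - 2 * (m : ℤ)) * (δ : ℤ)))
    (Γ : SimpleGraph (Fin n)) (s : Fin n) (K D O : Finset (Fin n))
    (hKD : K ⊆ D) (hsK : s ∈ K) (hDO : Disjoint D O)
    (hs : deg Γ s < d s) (hD : ∀ v ∈ D, deg Γ v ≤ d v) (hO : ∀ v ∈ O, d v ≤ deg Γ v)
    (h0 : ∀ x, x ≠ s → ¬ Γ.Adj s x → x ∈ O)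
    (h2 : ∀ x ∈ O, ∀ y, Γ.Adj x y → y ∈ D)
    (h3 : ∀ v ∈ D, (∀ u, u ≠ v → ¬ Γ.Adj v u → u ∈ O) ∨
      (∀ j j', j ≠ s → ¬ Γ.Adj s j → j' ≠ s → ¬ Γ.Adj s j' → Γ.Adj v j → Γ.Adj v j' → j = j'))
    (h4 : ∀ u ∈ K, ∀ v ∈ D, u ≠ v → Γ.Adj u v)
    (hK : ∃ j ∈ O, ¬ Γ.Adj j s ∧ ∀ k, Γ.Adj j k → k ∈ K)
    (h5 : ∀ x, x ∉ O → x ∉ D → δ ≤ (K.filter fun v => Γ.Adj v x).card)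
    (h6 : ∀ x ∈ O, (∀ y, Γ.Adj x y → ∀ v ∈ D, v ≠ y → Γ.Adj y v) ∨
      δ ≤ (K.filter fun v => Γ.Adj v x).card) : False := by
  have hsD : s ∈ D := hKD hsK
  set A : Fin n → Fin n → ℤ := fun v u => if Γ.Adj v u then 1 else 0 with hA
  have hAs : ∀ v u, A v u = A u v := fun v u => by simp only [hA, Γ.adj_comm]
  have hA0 : ∀ v u, 0 ≤ A v u := fun v u => by simp only [hA]; split_ifs <;> simp
  have hdeg : ∀ v, (deg Γ v : ℤ) = ∑ u, A v u := fun v => deg_eq_sum Γ v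
  have hM : ∑ v, (d v : ℤ) = 2 * (m : ℤ) := by exact_mod_cast hm.symm
  have hn : ∑ _u : Fin n, (1 : ℤ) = n := by simp
  obtain ⟨q, hq⟩ : ∃ q : ℤ, q = (O.card : ℤ) := ⟨_, rfl⟩
  have hcard : ∀ T : Finset (Fin n), ∑ u, (if u ∈ T then (1 : ℤ) else 0) = T.card := by
    intro T; simp
  have hsΔ : (deg Γ s : ℤ) + 1 ≤ Δ := by have := hΔle s; omega
  -- non-neighbours of `s`
  have hq1 : ∑ u, (if u ≠ s ∧ ¬ Γ.Adj s u then (1 : ℤ) else 0) = n - 1 - deg Γ s := by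
    have : ∀ u, (if u ≠ s ∧ ¬ Γ.Adj s u then (1 : ℤ) else 0) =
        1 - (if u = s then 1 else 0) - A s u := by
      intro u
      have := Γ.irrefl (v := s)
      simp only [hA]
      grind
    rw [Finset.sum_congr rfl fun u _ => this u, Finset.sum_sub_distrib, Finset.sum_sub_distrib,
      hdeg, hn]
    simp
  have hcol : ∀ (T : Finset (Fin n)) (u), (∀ y, Γ.Adj u y → y ∈ T) →
      ∑ v ∈ T, A v u = deg Γ u := by
    intro T u hu
    rw [hdeg, Finset.sum_congr rfl fun v _ => hAs v u]
    refine Finset.sum_subset (Finset.subset_univ _) fun v _ hv => ?_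
    simp only [ite_eq_right_iff, one_ne_zero, imp_false]
    exact fun h => hv (hu v h)
  have hpΔ : (D.card : ℤ) ≤ Δ := by
    have : (D.card : ℤ) - 1 ≤ deg Γ s := by
      rw [hdeg, ← hcard]
      have h1 : ∑ u, ((if u ∈ D then (1 : ℤ) else 0) - if u = s then 1 else 0) ≤ ∑ u, A s u := by
        refine Finset.sum_le_sum fun u _ => ?_
        have := h4 s hsK u
        simp only [hA]
        grind
      rw [Finset.sum_sub_distrib] at h1
      simpa using h1
    omega
  have hKδ : (δ : ℤ) + 1 ≤ K.card := by
    obtain ⟨j, hjO, hjs, hjK⟩ := hK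
    have h1 : deg Γ j = (Γ.neighborFinset j).card := by
      rw [deg_eq_degree, SimpleGraph.card_neighborFinset_eq_degree]
    have h7 : insert s (Γ.neighborFinset j) ⊆ K := by
      intro v hv
      rcases Finset.mem_insert.1 hv with rfl | hv
      · exact hsK
      · exact hjK v (by simpa using hv)
    have h8 := Finset.card_le_card h7
    rw [Finset.card_insert_of_notMem (by simpa using hjs)] at h8
    have := hO j hjO
    have := hδle j
    omega
  have hKp : (K.card : ℤ) ≤ D.card := by exact_mod_cast Finset.card_le_card hKD
  have hpq : (D.card : ℤ) + q ≤ n := by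
    have := Finset.card_le_univ (D ∪ O)
    rw [Finset.card_union_of_disjoint hDO, Fintype.card_fin] at this
    omega
  have hδ0 : (0 : ℤ) ≤ δ := by positivity
  have hΔn' : (Δ : ℤ) ≤ n - 1 := by omega
  have hq0 : (n : ℤ) - Δ ≤ q := by
    have h7 : ∑ u, (if u ≠ s ∧ ¬ Γ.Adj s u then (1 : ℤ) else 0) ≤
        ∑ u, if u ∈ O then (1 : ℤ) else 0 := by
      refine Finset.sum_le_sum fun u _ => ?_
      have := h0 u
      grind
    rw [hq1, hcard] at h7
    omega
  -- Rows of a subset `T` of `D`, with the columns outside `O` filled up, have sum at most `Δ`.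
  have key : ∀ T ⊆ D, s ∈ T → ∀ S : ℤ, S ≤ ∑ u ∈ O, ∑ v ∈ T, A v u →
      (T.card : ℤ) * (n - q - 1) + S ≤ T.card * Δ - 1 := by
    intro T hTD hsT S hS
    set R : Fin n → Fin n → ℤ := fun v u => if u ≠ v ∧ (u ∉ O ∨ Γ.Adj v u) then 1 else 0 with hR
    have hR1 : ∀ v, (∀ u, u ≠ v → ¬ Γ.Adj v u → u ∈ O) → ∑ u, R v u ≤ deg Γ v := by
      intro v hv
      rw [hdeg]
      refine Finset.sum_le_sum fun u _ => ?_
      have := hv u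
      simp only [hR, hA]
      grind
    have hRs : ∑ u, R s u ≤ Δ - 1 := by
      have := hR1 s h0
      omega
    have hRv : ∀ v ∈ D, ∑ u, R v u ≤ Δ := by
      intro v hv
      rcases h3 v hv with h | h
      · have := hR1 v h
        have := hD v hv
        have := hΔle v
        omega
      · by_cases hvs : v = s
        · subst hvs; omega
        have hone : ∑ u, (if (u ≠ s ∧ ¬ Γ.Adj s u) ∧ Γ.Adj v u then (1 : ℤ) else 0) ≤ 1 := by
          rw [Finset.sum_boole]
          have : (Finset.univ.filter fun u => (u ≠ s ∧ ¬ Γ.Adj s u) ∧ Γ.Adj v u).card ≤ 1 := by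
            rw [Finset.card_le_one]
            intro a ha b hb
            simp only [Finset.mem_filter, Finset.mem_univ, true_and] at ha hb
            exact h a b ha.1.1 ha.1.2 hb.1.1 hb.1.2 ha.2 hb.2
          exact_mod_cast this
        have hsum : ∑ u, R v u ≤ ∑ u, ((1 - (if u = v then 1 else 0) -
            (if u ≠ s ∧ ¬ Γ.Adj s u then (1 : ℤ) else 0)) +
            (if (u ≠ s ∧ ¬ Γ.Adj s u) ∧ Γ.Adj v u then (1 : ℤ) else 0)) := by
          refine Finset.sum_le_sum fun u _ => ?_
          have := h0 u
          have := h4 s hsK v hv (Ne.symm hvs)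
          simp only [hR]
          grind
        rw [Finset.sum_add_distrib, Finset.sum_sub_distrib, Finset.sum_sub_distrib, hq1, hn] at hsum
        simp only [Finset.sum_ite_eq', Finset.mem_univ, if_true] at hsum
        omega
    have hup : ∑ v ∈ T, ∑ u, R v u ≤ T.card * Δ - 1 := by
      have h7 : ∑ v ∈ T, ∑ u, R v u ≤ ∑ v ∈ T, ((Δ : ℤ) - if v = s then 1 else 0) := by
        refine Finset.sum_le_sum fun v hv => ?_
        by_cases hvs : v = s
        · subst hvs; simpa using hRs
        · simpa [hvs] using hRv v (hTD hv)
      rw [Finset.sum_sub_distrib] at h7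
      simpa [hsT] using h7
    refine le_trans ?_ hup
    rw [Finset.sum_comm]
    have h7 : ∑ u, ((if u ∈ O then ∑ v ∈ T, A v u - T.card else 0) + (T.card : ℤ) -
        if u ∈ T then 1 else 0) ≤ ∑ u, ∑ v ∈ T, R v u := by
      refine Finset.sum_le_sum fun u _ => ?_
      by_cases hu : u ∈ O
      · have h7 : ∑ v ∈ T, R v u = ∑ v ∈ T, A v u := by
          refine Finset.sum_congr rfl fun v _ => ?_
          have := Γ.irrefl (v := v)
          simp only [hR, hA]
          grind
        rw [h7]
        simp only [hu, if_true]
        split_ifs <;> omega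
      · have h7 : ∑ v ∈ T, R v u = ∑ v ∈ T, (1 - if v = u then (1 : ℤ) else 0) := by
          refine Finset.sum_congr rfl fun v _ => ?_
          simp only [hR]
          grind
        rw [h7, Finset.sum_sub_distrib]
        simp [hu]
    rw [Finset.sum_sub_distrib, Finset.sum_add_distrib, hcard] at h7
    have h8 : ∑ u, (if u ∈ O then ∑ v ∈ T, A v u - T.card else 0) =
        ∑ u ∈ O, ∑ v ∈ T, A v u - q * T.card := by
      rw [← Finset.sum_filter, Finset.filter_mem_eq_inter, Finset.univ_inter,
        Finset.sum_sub_distrib]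
      simp [hq]
    rw [h8] at h7
    simp only [Finset.sum_const, Finset.card_univ, Fintype.card_fin, nsmul_eq_mul] at h7
    linarith
  rcases le_total ((D.card : ℤ) * ((Δ : ℤ) - δ)) (2 * (m : ℤ) - n * δ) with hle | hle
  · have hS1 : q * δ ≤ ∑ u ∈ O, (d u : ℤ) := by
      have := Finset.card_nsmul_le_sum O (fun u => (d u : ℤ)) δ
        (fun u _ => by exact_mod_cast hδle u)
      simpa [hq] using this
    have hS2 : 2 * (m : ℤ) - (n - q) * Δ ≤ ∑ u ∈ O, (d u : ℤ) := by
      have h7 : ∑ u ∈ Oᶜ, (d u : ℤ) ≤ (n - q) * Δ := by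
        have := Finset.sum_le_card_nsmul Oᶜ (fun u => (d u : ℤ)) Δ
          (fun u _ => by exact_mod_cast hΔle u)
        rw [Finset.card_compl, Fintype.card_fin, nsmul_eq_mul, Nat.cast_sub] at this
        · rwa [hq]
        · simpa using Finset.card_le_univ O
      have := Finset.sum_add_sum_compl O (fun u => (d u : ℤ))
      linarith
    refine numeric_one (by omega) hpΔ hδ0 hΔn' hq0 hineq hle (key D subset_rfl hsD _ ?_) hS1 hS2
    refine Finset.sum_le_sum fun u hu => ?_
    rw [hcol D u (h2 u hu)]
    exact_mod_cast hO u hu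
  · -- the vertices of `D` that are complete to `D` form a clique containing `K`
    set T : Finset (Fin n) := D.filter fun y => ∀ v ∈ D, v ≠ y → Γ.Adj y v with hT
    have hTD : T ⊆ D := Finset.filter_subset _ _
    have hmT : ∀ y, y ∈ T ↔ y ∈ D ∧ ∀ v ∈ D, v ≠ y → Γ.Adj y v := fun y => by simp [hT]
    have hKT : K ⊆ T := fun y hy => (hmT y).2 ⟨hKD hy, fun v hv hne => h4 y hy v hv hne.symm⟩
    have hTp : (T.card : ℤ) ≤ D.card := by exact_mod_cast Finset.card_le_card hTD
    have hKTp : (K.card : ℤ) ≤ T.card := by exact_mod_cast Finset.card_le_card hKT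
    have hsT := hKT hsK
    have hKcol : ∀ u, δ ≤ (K.filter fun v => Γ.Adj v u).card → (δ : ℤ) ≤ ∑ v ∈ T, A v u := by
      intro u hu
      have h7 : (δ : ℤ) ≤ ∑ v ∈ K, A v u := by
        simp only [hA, Finset.sum_boole]
        exact_mod_cast hu
      exact h7.trans (Finset.sum_le_sum_of_subset_of_nonneg hKT fun v _ _ => hA0 v u)
    have hOcol : ∀ u ∈ O, (δ : ℤ) ≤ ∑ v ∈ T, A v u := by
      intro u hu
      rcases h6 u hu with h | h
      · rw [hcol T u fun y hy => (hmT y).2 ⟨h2 u hu y hy, h y hy⟩]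
        exact_mod_cast (hδle u).trans (hO u hu)
      · exact hKcol u h
    rcases le_total ((T.card : ℤ) * ((Δ : ℤ) - δ)) (2 * (m : ℤ) - n * δ) with hle' | hle'
    · refine numeric_one (S := q * δ) (by omega) (hTp.trans hpΔ) hδ0 hΔn' hq0 hineq hle'
        (key T hTD hsT _ ?_) le_rfl ?_
      · have := Finset.card_nsmul_le_sum O _ _ hOcol
        simpa [hq] using this
      · have : ((D.card : ℤ) + q) * (Δ - δ) ≤ n * (Δ - δ) :=
          mul_le_mul_of_nonneg_right hpq (by omega)
        linarith
    -- the columns not complete to `T`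
    set O' : Finset (Fin n) := Finset.univ.filter fun u => ∃ v ∈ T, v ≠ u ∧ ¬ Γ.Adj v u with hO'
    have hmem : ∀ u, u ∈ O' ↔ ∃ v ∈ T, v ≠ u ∧ ¬ Γ.Adj v u := fun u => by simp [hO']
    have hdisj : ∀ u ∈ O', u ∉ D := by
      intro u hu hu'
      obtain ⟨v, hv, hne, hadj⟩ := (hmem u).1 hu
      exact hadj (((hmT v).1 hv).2 u hu' hne.symm)
    have hq0' : (n : ℤ) - Δ ≤ O'.card := by
      have h7 : ∑ u, (if u ≠ s ∧ ¬ Γ.Adj s u then (1 : ℤ) else 0) ≤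
          ∑ u, if u ∈ O' then (1 : ℤ) else 0 := by
        refine Finset.sum_le_sum fun u _ => ?_
        have : u ≠ s ∧ ¬ Γ.Adj s u → u ∈ O' := fun h =>
          (hmem u).2 ⟨s, hsT, h.1.symm, h.2⟩
        grind
      rw [hq1, hcard] at h7
      omega
    have hpq' : (T.card : ℤ) + O'.card ≤ n := by
      rw [← hcard, ← hcard, ← hn, ← Finset.sum_add_distrib]
      refine Finset.sum_le_sum fun u _ => ?_
      have := hdisj u
      have := @hTD u
      grind
    have hlow : (T.card : ℤ) * (n - O'.card - 1) + O'.card * δ ≤ ∑ v ∈ T, (deg Γ v : ℤ) := by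
      rw [Finset.sum_congr rfl fun v _ => hdeg v, Finset.sum_comm]
      have h7 : ∑ u, ((if u ∈ O' then 1 else 0) * ((δ : ℤ) - T.card) + T.card -
          if u ∈ T then 1 else 0) ≤ ∑ u, ∑ v ∈ T, A v u := by
        refine Finset.sum_le_sum fun u _ => ?_
        by_cases hu : u ∈ O'
        · have h7 : (δ : ℤ) ≤ ∑ v ∈ T, A v u := by
            by_cases huO : u ∈ O
            · exact hOcol u huO
            · exact hKcol u (h5 u huO (hdisj u hu))
          have : u ∉ T := fun h => hdisj u hu (hTD h)
          simpa [hu, this] using h7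
        · have h7 : ∑ v ∈ T, A v u = ∑ v ∈ T, (1 - if v = u then (1 : ℤ) else 0) := by
            refine Finset.sum_congr rfl fun v hv => ?_
            have h8 := mt (hmem u).2 hu
            push Not at h8
            have := h8 v hv
            have := Γ.irrefl (v := v)
            simp only [hA]
            grind
          rw [h7, Finset.sum_sub_distrib]
          simp [hu]
      rw [Finset.sum_sub_distrib, Finset.sum_add_distrib, hcard, ← Finset.sum_mul, hcard] at h7
      simp only [Finset.sum_const, Finset.card_univ, Fintype.card_fin, nsmul_eq_mul] at h7
      linarith
    have hup : ∑ v ∈ T, (deg Γ v : ℤ) ≤ 2 * (m : ℤ) - (n - T.card) * δ - 1 := by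
      have h7 : ∑ v ∈ T, (deg Γ v : ℤ) ≤ ∑ v ∈ T, ((d v : ℤ) - if v = s then 1 else 0) := by
        refine Finset.sum_le_sum fun v hv => ?_
        have := hD v (hTD hv)
        split_ifs with hvs
        · subst hvs; omega
        · omega
      rw [Finset.sum_sub_distrib] at h7
      have h8 : ((n : ℤ) - T.card) * δ ≤ ∑ u ∈ Tᶜ, (d u : ℤ) := by
        have := Finset.card_nsmul_le_sum Tᶜ (fun u => (d u : ℤ)) δ
          (fun u _ => by exact_mod_cast hδle u)
        rw [Finset.card_compl, Fintype.card_fin, nsmul_eq_mul, Nat.cast_sub] at this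
        · exact this
        · simpa using Finset.card_le_univ T
      have h9 := Finset.sum_add_sum_compl T (fun u => (d u : ℤ))
      have h10 : ∑ v ∈ T, (if v = s then (1 : ℤ) else 0) = 1 := by simp [hsT]
      linarith
    exact numeric_two (hKδ.trans hKTp) (hTp.trans hpΔ) hδ0 hΔn' hq0' hpq' hineq hle'
      (hlow.trans hup)

/-! ### Trails excluded in a stuck graph -/

/-- `G` is *stuck* at `s, t`: its deficient vertices `s`, `t` coincide or are adjacent twins, and
no realization lies within JS distance five. -/
structure Stuck {n : ℕ} (d : Fin n → ℕ) (G : SimpleGraph (Fin n)) (s t : Fin n) : Prop where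
  dfc : Dfc d G s t
  not_reach : ¬ Reach d 5 G
  adj : s = t ∨ G.Adj s t
  twin : ∀ x, Gᶜ.Adj s x ↔ Gᶜ.Adj t x

namespace Stuck

variable {n : ℕ} {d : Fin n → ℕ} {G : SimpleGraph (Fin n)} {s t : Fin n}

/-- The non-neighbours of `s` are independent. -/
theorem indep (S : Stuck d G s t) {j k : Fin n} (hj : Gᶜ.Adj s j) (hjk : G.Adj j k) :
    ¬ Gᶜ.Adj s k := fun hk =>
  no_trail_one S.dfc S.not_reach hj hjk ((S.twin k).1 hk).symm

theorem adj_of_stem (S : Stuck d G s t) {j k : Fin n} (hj : Gᶜ.Adj s j) (hjk : G.Adj j k) :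
    G.Adj s k := by
  have h1 := S.indep hj hjk
  rw [compl_adj] at h1 hj
  have := hjk.symm
  grind

/-- Excludes the trail `s | j ~ k | k' ~ j' | t`. If `j = j'`, its first and last non-edges differ
only when `s ≠ t`. -/
theorem no_two (S : Stuck d G s t) {j k j' k' : Fin n} (hj : Gᶜ.Adj s j) (hjk : G.Adj j k)
    (hj' : Gᶜ.Adj s j') (hjk' : G.Adj j' k') (hkk : Gᶜ.Adj k k') (hC : j ≠ j' ∨ s ≠ t) :
    False := by
  have a1 := S.indep hj hjk
  have a2 := S.indep hj' hjk'
  have a3 := (S.twin j).1 hj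
  have a4 := (S.twin j').1 hj'
  refine no_trail_two S.dfc S.not_reach hj hjk hkk hjk'.symm a4.symm ?_ ?_ <;>
    rw [compl_adj] at * <;> have a5 := hjk.symm <;> have a6 := hjk'.symm <;>
    have a7 := hjk.ne <;> have a8 := hjk'.ne <;>
    simp only [List.nodup_cons, List.mem_cons, List.not_mem_nil, Sym2.eq_iff] <;> grind

/-- Excludes the trail `s | j ~ k | x ~ y | t`. -/
theorem no_nbr (S : Stuck d G s t) {j k x y : Fin n} (hj : Gᶜ.Adj s j) (hjk : G.Adj j k)
    (hkx : Gᶜ.Adj k x) (hxy : G.Adj x y) (hy : Gᶜ.Adj s y) (hC : j ≠ y ∨ s ≠ t) : False := by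
  have a1 := S.indep hj hjk
  have a3 := (S.twin j).1 hj
  have a4 := (S.twin y).1 hy
  refine no_trail_two S.dfc S.not_reach hj hjk hkx hxy a4.symm ?_ ?_ <;>
    rw [compl_adj] at * <;> have a5 := hjk.symm <;> have a6 := hxy.symm <;>
    have a7 := hjk.ne <;> have a8 := hxy.ne <;>
    simp only [List.nodup_cons, List.mem_cons, List.not_mem_nil, Sym2.eq_iff] <;> grind

/-- Excludes the trail `s | j ~ k | x ~ y | k' ~ j' | t`. -/
theorem no_three (S : Stuck d G s t) {j k x y j' k' : Fin n} (hj : Gᶜ.Adj s j) (hjk : G.Adj j k)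
    (hj' : Gᶜ.Adj s j') (hjk' : G.Adj j' k') (hkx : Gᶜ.Adj k x) (hxy : G.Adj x y)
    (hyk : Gᶜ.Adj y k') (hC : j ≠ j' ∨ (s ≠ t ∧ k ≠ k')) : False := by
  have a1 := S.adj_of_stem hj hjk
  have a2 := S.adj_of_stem hj' hjk'
  have a3 := (S.twin j).1 hj
  have a4 := (S.twin j').1 hj'
  refine no_trail_three S.dfc S.not_reach hj hjk hkx hxy hyk hjk'.symm a4.symm ?_ ?_ <;>
    rw [compl_adj] at * <;> have a5 := hjk.symm <;> have a6 := hjk'.symm <;>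
    have a7 := hjk.ne <;> have a8 := hjk'.ne <;> have a9 := hxy.symm <;> have a10 := hxy.ne <;>
    simp only [List.nodup_cons, List.mem_cons, List.not_mem_nil, Sym2.eq_iff] <;> grind

/-- Excludes the trail `s | j ~ k | x ~ y | y' ~ x' | k' ~ j' | t`; the hypothesis `hne` says that its
second and fourth non-edges differ. -/
theorem no_four (S : Stuck d G s t) {j k x y y' x' j' k' : Fin n}
    (hj : Gᶜ.Adj s j) (hjk : G.Adj j k) (hj' : Gᶜ.Adj s j') (hjk' : G.Adj j' k')
    (hx : ¬ Gᶜ.Adj s x) (hy : ¬ Gᶜ.Adj s y) (hy' : ¬ Gᶜ.Adj s y') (hx' : ¬ Gᶜ.Adj s x')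
    (hkx : Gᶜ.Adj k x) (hxy : G.Adj x y) (hyy : Gᶜ.Adj y y') (hxy' : G.Adj x' y')
    (hkx' : Gᶜ.Adj k' x') (hC : j ≠ j' ∨ (s ≠ t ∧ k ≠ k')) (hne : s(k, x) ≠ s(x', k')) :
    False := by
  have a1 := S.adj_of_stem hj hjk
  have a2 := S.adj_of_stem hj' hjk'
  have a3 := (S.twin j).1 hj
  have a4 := (S.twin j').1 hj'
  refine no_trail_four S.dfc S.not_reach hj hjk hkx hxy hyy hxy'.symm hkx'.symm hjk'.symm a4.symm
    ?_ ?_ <;>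
    rw [compl_adj] at * <;> have a5 := hjk.symm <;> have a6 := hjk'.symm <;>
    have a7 := hjk.ne <;> have a8 := hjk'.ne <;> have a9 := hxy.symm <;> have a10 := hxy.ne <;>
    have a11 := hxy'.symm <;> have a12 := hxy'.ne <;>
    simp only [List.nodup_cons, List.mem_cons, List.not_mem_nil, Sym2.eq_iff, ne_eq] at hne ⊢ <;>
    grind (splits := 30)

/-- Two different non-neighbours `j`, `j₂` of `s` cannot both have two non-adjacent neighbours, since
the trail `s | j ~ k | k' ~ j | j₂ ~ k₂ | k₃ ~ j₂ | s` would exist. -/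
theorem no_two_loops (S : Stuck d G s s) {j k k' j₂ k₂ k₃ : Fin n} (hj : Gᶜ.Adj s j)
    (hjk : G.Adj j k) (hjk' : G.Adj j k') (hkk : Gᶜ.Adj k k') (hj₂ : Gᶜ.Adj s j₂)
    (hjk₂ : G.Adj j₂ k₂) (hjk₃ : G.Adj j₂ k₃) (hkk₂ : Gᶜ.Adj k₂ k₃) (hne : j ≠ j₂) : False := by
  have a0 : Gᶜ.Adj j j₂ := ⟨hne, fun h => S.indep hj h hj₂⟩
  have a1 := S.adj_of_stem hj hjk
  have a2 := S.adj_of_stem hj hjk'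
  have a3 := S.adj_of_stem hj₂ hjk₂
  have a4 := S.adj_of_stem hj₂ hjk₃
  have b1 : k ≠ k₂ := fun h => S.no_two hj₂ (h ▸ hjk₂) hj hjk' hkk (Or.inl hne.symm)
  have b2 : k ≠ k₃ := fun h => S.no_two hj₂ (h ▸ hjk₃) hj hjk' hkk (Or.inl hne.symm)
  refine no_trail_four S.dfc S.not_reach hj hjk hkk hjk'.symm a0 hjk₂ hkk₂ hjk₃.symm hj₂.symm
    ?_ ?_ <;>
    rw [compl_adj] at * <;> have a5 := hjk.symm <;> have a6 := hjk'.symm <;>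
    have a7 := hjk.ne <;> have a8 := hjk'.ne <;> have a9 := hjk₂.symm <;> have a10 := hjk₂.ne <;>
    have a11 := hjk₃.symm <;> have a12 := hjk₃.ne <;>
    simp only [List.nodup_cons, List.mem_cons, List.not_mem_nil, Sym2.eq_iff] <;> grind (splits := 30)

end Stuck

/-! ### Stuck graphs in which neighbourhoods of non-neighbours are cliques -/

theorem exists_compl_adj {n : ℕ} (G : SimpleGraph (Fin n)) (s : Fin n) (A : Finset (Fin n))
    (h : deg G s + A.card + 1 < n) : ∃ j, j ∉ A ∧ Gᶜ.Adj s j := by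
  classical
  by_contra! hc
  have hsub : (Finset.univ : Finset (Fin n)) ⊆ insert s (A ∪ G.neighborFinset s) := by
    intro j _
    by_cases hj : j ∈ A
    · simp [hj]
    · have := hc j hj
      rw [compl_adj] at this
      simp only [Finset.mem_insert, Finset.mem_union, mem_neighborFinset]
      grind
  have h1 := Finset.card_le_card hsub
  have h2 := Finset.card_insert_le s (A ∪ G.neighborFinset s)
  have h3 := Finset.card_union_le A (G.neighborFinset s)
  rw [card_neighborFinset_eq_degree, ← deg_eq_degree] at h3
  simp only [Finset.card_univ, Fintype.card_fin] at h1
  omega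

open Classical in
/-- If `x` is adjacent to `s` and to all neighbours of `j` but at most one, where `s` is not a
neighbour of `j`, then `x` has at least `deg j` neighbours among `s` and the neighbours of `j`. -/
theorem card_filter_ge {n : ℕ} (G : SimpleGraph (Fin n)) {s j x κ : Fin n} (K : Finset (Fin n))
    (hsK : s ∈ K) (hjK : ∀ k, G.Adj j k → k ∈ K) (hjs : ¬ G.Adj j s) (hsx : G.Adj s x)
    (h : ∀ k, G.Adj j k → k ≠ κ → G.Adj k x) :
    deg G j ≤ (K.filter fun v => G.Adj v x).card := by
  have hsub : (insert s (G.neighborFinset j)).erase κ ⊆ K.filter fun v => G.Adj v x := by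
    intro v hv
    simp only [Finset.mem_erase, Finset.mem_insert, mem_neighborFinset] at hv
    obtain ⟨hv1, rfl | hv2⟩ := hv
    · simp [hsK, hsx]
    · simp [hjK v hv2, h v hv2 hv1]
  have h1 := Finset.card_le_card hsub
  have h2 := Finset.pred_card_le_card_erase (s := insert s (G.neighborFinset j)) (a := κ)
  rw [Finset.card_insert_of_notMem (by simpa using hjs), card_neighborFinset_eq_degree,
    ← deg_eq_degree] at h2
  omega

/-- The vertex `v` is `s` or is reached from `s` by a non-edge followed by an edge. -/
def Core {n : ℕ} (G : SimpleGraph (Fin n)) (s v : Fin n) : Prop :=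
  v = s ∨ ∃ j, Gᶜ.Adj s j ∧ G.Adj j v

/-- The vertex `x` is the end of two alternating walks `s | j ~ k | x` and `s | j' ~ k' | x` which
are compatible, in the sense that their first two steps can be used in one trail from `s` to
`t`. -/
def Dbl {n : ℕ} (G : SimpleGraph (Fin n)) (s t x : Fin n) : Prop :=
  ∃ j k j' k', Gᶜ.Adj s j ∧ G.Adj j k ∧ Gᶜ.Adj s j' ∧ G.Adj j' k' ∧ Gᶜ.Adj k x ∧ Gᶜ.Adj k' x ∧
    (j ≠ j' ∨ (s ≠ t ∧ k ≠ k'))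

/-- Of two compatible walks to `x`, one is compatible with any given third walk. -/
theorem Dbl.choose {n : ℕ} {G : SimpleGraph (Fin n)} {s t x : Fin n} (h : Dbl G s t x)
    (j₀ k₀ : Fin n) :
    ∃ j k, Gᶜ.Adj s j ∧ G.Adj j k ∧ Gᶜ.Adj k x ∧ (j ≠ j₀ ∨ (s ≠ t ∧ k ≠ k₀)) := by
  obtain ⟨j, k, j', k', h1, h2, h3, h4, h5, h6, h7⟩ := h
  by_cases h8 : j ≠ j₀ ∨ (s ≠ t ∧ k ≠ k₀)
  · exact ⟨j, k, h1, h2, h5, h8⟩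
  · refine ⟨j', k', h3, h4, h6, ?_⟩
    grind

namespace Stuck

variable {n : ℕ} {d : Fin n → ℕ} {G : SimpleGraph (Fin n)} {s t : Fin n}

theorem deg_le (S : Stuck d G s t) (v : Fin n) : deg G v ≤ d v := (memG'_of_Dfc S.dfc).1 v

theorem deg_eq (S : Stuck d G s t) {v : Fin n} (hs : v ≠ s) (ht : v ≠ t) : deg G v = d v := by
  have := S.dfc v
  simp only [hs, ht, if_false] at this
  omega

theorem not_compl_adj_t (S : Stuck d G s t) : ¬ Gᶜ.Adj s t := by
  rw [compl_adj]
  have := S.adj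
  tauto

theorem core_not_compl_adj (S : Stuck d G s t) {v : Fin n} (h : Core G s v) : ¬ Gᶜ.Adj s v := by
  obtain rfl | ⟨j, hj, hjk⟩ := h
  · simp
  · exact S.indep hj hjk

theorem core_clique (S : Stuck d G s t)
    (hnb : ∀ j k k', Gᶜ.Adj s j → G.Adj j k → G.Adj j k' → ¬ Gᶜ.Adj k k')
    {u v : Fin n} (hu : Core G s u) (hv : Core G s v) (huv : u ≠ v) : G.Adj u v := by
  obtain rfl | ⟨j, hj, hjk⟩ := hu <;> obtain rfl | ⟨j', hj', hjk'⟩ := hv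
  · exact (huv rfl).elim
  · exact S.adj_of_stem hj' hjk'
  · exact (S.adj_of_stem hj hjk).symm
  · by_contra h
    have hc : Gᶜ.Adj u v := ⟨huv, h⟩
    by_cases hjj : j = j'
    · subst hjj
      exact hnb j u v hj hjk hjk' hc
    · exact S.no_two hj hjk hj' hjk' hc (Or.inl hjj)

theorem dbl_nbr (S : Stuck d G s t) {x y : Fin n} (hx : Dbl G s t x) (hxy : G.Adj x y) :
    ¬ Gᶜ.Adj s y := by
  intro hy
  obtain ⟨j, k, h1, h2, h3, h4⟩ := hx.choose y y
  exact S.no_nbr h1 h2 h3 hxy hy (by tauto)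

/-- Neighbours of the end of two compatible walks are adjacent to the whole core. -/
theorem dbl_nbr_core (S : Stuck d G s t) {x y v : Fin n} (hx : Dbl G s t x) (hxy : G.Adj x y)
    (hv : Core G s v) (hne : v ≠ y) : G.Adj v y := by
  by_contra h
  have hc : Gᶜ.Adj v y := ⟨hne, h⟩
  obtain rfl | ⟨j', hj', hjk'⟩ := hv
  · exact S.dbl_nbr hx hxy hc
  · obtain ⟨j, k, h1, h2, h3, h4⟩ := hx.choose j' v
    exact S.no_three h1 h2 hj' hjk' h3 hxy hc.symm h4

theorem dbl_not_core (S : Stuck d G s t)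
    (hnb : ∀ j k k', Gᶜ.Adj s j → G.Adj j k → G.Adj j k' → ¬ Gᶜ.Adj k k')
    {x : Fin n} (hx : Dbl G s t x) : ¬ Core G s x := by
  intro h
  obtain ⟨j, k, h1, h2, h3, h4⟩ := hx.choose x x
  exact h3.2 (S.core_clique hnb (Or.inr ⟨j, h1, h2⟩) h h3.1)

theorem dbl_ne_t (S : Stuck d G s t) {x : Fin n} (hx : Dbl G s t x) : x ≠ t := by
  rintro rfl
  obtain ⟨j, k, h1, h2, h3, h4⟩ := hx.choose x x
  exact S.indep h1 h2 ((S.twin k).2 h3.symm)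

/-- If the end `x` of two compatible walks has a neighbour `y` which is not adjacent to a neighbour
of some such end, then `x` misses at most one vertex of any neighbourhood of a non-neighbour of
`s`, since otherwise there is a trail with four edges. -/
theorem dbl_unique (S : Stuck d G s t)
    (hnb : ∀ j k k', Gᶜ.Adj s j → G.Adj j k → G.Adj j k' → ¬ Gᶜ.Adj k k')
    {x x' y y' j₀ k k' : Fin n} (hx : Dbl G s t x) (hx' : Dbl G s t x') (hsx : ¬ Gᶜ.Adj s x)
    (hsx' : ¬ Gᶜ.Adj s x') (hxy : G.Adj x y) (hxy' : G.Adj x' y') (hyy : Gᶜ.Adj y y')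
    (hj : Gᶜ.Adj s j₀) (hk : G.Adj j₀ k) (hkx : Gᶜ.Adj k x) (hk' : G.Adj j₀ k')
    (hkx' : Gᶜ.Adj k' x) : k = k' := by
  have hxc := S.dbl_not_core hnb hx
  have key : ∀ ja ka jb kb, Gᶜ.Adj s ja → G.Adj ja ka → Gᶜ.Adj ka x → Gᶜ.Adj s jb →
      G.Adj jb kb → Gᶜ.Adj kb x' → (ja ≠ jb ∨ (s ≠ t ∧ ka ≠ kb)) → x = x' ∧ ka = kb := by
    intro ja ka jb kb h1 h2 h3 h4 h5 h6 h7
    by_contra hcon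
    refine S.no_four h1 h2 h4 h5 hsx (S.dbl_nbr hx hxy) (S.dbl_nbr hx' hxy') hsx' h3 hxy hyy hxy'
      h6 h7 ?_
    rw [Ne, Sym2.eq_iff]
    rintro (⟨h8, h9⟩ | ⟨h8, h9⟩)
    · exact hxc (Or.inr ⟨jb, h4, h9 ▸ h5⟩)
    · exact hcon ⟨h9, h8⟩
  obtain ⟨jb, kb, h1, h2, h3, h4⟩ := hx'.choose j₀ k
  obtain ⟨e1, e2⟩ := key j₀ k jb kb hj hk hkx h1 h2 h3 (by tauto)
  subst e1
  by_cases hst : s = t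
  · exact e2.trans (key j₀ k' jb kb hj hk' hkx' h1 h2 h3 (by tauto)).2.symm
  · by_contra hkk
    exact hkk (key j₀ k j₀ k' hj hk hkx hj hk' hkx' (Or.inr ⟨hst, hkk⟩)).2

/-- A stuck graph in which the neighbours of each non-neighbour of `s` form a clique contradicts
the degree condition. -/
theorem false_of_clique (S : Stuck d G s t) (δ Δ m : ℕ)
    (hδle : ∀ v, δ ≤ d v) (hΔle : ∀ v, d v ≤ Δ) (hΔn : Δ + 1 ≤ n)
    (hm : 2 * m = ∑ v, d v)
    (hineq : (2 * (m : ℤ) - (n : ℤ) * (δ : ℤ)) * ((n : ℤ) * (Δ : ℤ) - 2 * (m : ℤ)) ≤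
      ((Δ : ℤ) - (δ : ℤ)) *
        ((2 * (m : ℤ) - (n : ℤ) * (δ : ℤ)) * ((n : ℤ) - (Δ : ℤ) - 1) +
          ((n : ℤ) * (Δ : ℤ) - 2 * (m : ℤ)) * (δ : ℤ)))
    (hnb : ∀ j k k', Gᶜ.Adj s j → G.Adj j k → G.Adj j k' → ¬ Gᶜ.Adj k k') : False := by
  classical
  have hdeg : deg G s < d s ∧ (s = t → deg G s + 2 ≤ d s) := by
    have := S.dfc s
    constructor
    · split_ifs at this <;> omega
    · intro h
      simp only [h] at this ⊢
      simp only [if_true] at this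
      omega
  have hds := hΔle s
  obtain ⟨j₀, -, hj₀⟩ := exists_compl_adj G s ∅ (by rw [Finset.card_empty]; omega)
  have hcore_s : Core G s s := Or.inl rfl
  have hcore : ∀ j k, Gᶜ.Adj s j → G.Adj j k → Core G s k := fun j k h1 h2 => Or.inr ⟨j, h1, h2⟩
  have hdegj : ∀ j, Gᶜ.Adj s j → δ ≤ deg G j := by
    intro j hj
    rw [S.deg_eq hj.1.symm (fun h => S.not_compl_adj_t (h ▸ hj))]
    exact hδle j
  have hcount : ∀ x j κ, G.Adj s x → Gᶜ.Adj s j → (∀ k, G.Adj j k → k ≠ κ → ¬ Gᶜ.Adj k x) →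
      ¬ Core G s x →
      δ ≤ ((Finset.univ.filter (Core G s)).filter fun v => G.Adj v x).card := by
    intro x j κ hsx hj h hxc
    refine (hdegj j hj).trans (card_filter_ge G (s := s) (κ := κ) _ (by simpa using hcore_s)
      (fun k hk => by simpa using hcore j k hj hk) (fun h => hj.2 h.symm) hsx ?_)
    intro k hk hκ
    have := h k hk hκ
    rw [compl_adj] at this
    have hkx : k ≠ x := fun e => hxc (e ▸ hcore j k hj hk)
    tauto
  -- the core is complete to everything in the first part of the partition
  have hcomp : ∀ u v, Core G s u → (Core G s v ∨ ∃ x, Dbl G s t x ∧ G.Adj x v) → u ≠ v →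
      G.Adj u v := by
    rintro u v hu (hv | ⟨x, hx, hxv⟩) huv
    · exact S.core_clique hnb hu hv huv
    · exact S.dbl_nbr_core hx hxv hu huv
  refine count_contra d δ Δ m hδle hΔle hΔn hm hineq G s
    (Finset.univ.filter fun v => Core G s v)
    (Finset.univ.filter fun v => Core G s v ∨ ∃ x, Dbl G s t x ∧ G.Adj x v)
    (Finset.univ.filter fun x => Gᶜ.Adj s x ∨ Dbl G s t x)
    ?_ ?_ ?_ hdeg.1 (fun v _ => S.deg_le v) ?_ ?_ ?_ ?_ ?_ ?_ ?_ ?_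
  · intro v
    simp only [Finset.mem_filter, Finset.mem_univ, true_and]
    exact Or.inl
  · simpa using hcore_s
  · rw [Finset.disjoint_left]
    intro v
    simp only [Finset.mem_filter, Finset.mem_univ, true_and]
    rintro (hv | ⟨x, hx, hxv⟩) (hO | hO)
    · exact S.core_not_compl_adj hv hO
    · exact S.dbl_not_core hnb hO hv
    · exact S.dbl_nbr hx hxv hO
    · obtain ⟨j, k, h1, h2, h3, -⟩ := hO.choose s s
      exact h3.2 (S.dbl_nbr_core hx hxv (hcore j k h1 h2) h3.1)
  · intro v
    simp only [Finset.mem_filter, Finset.mem_univ, true_and]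
    rintro (hO | hO)
    · rw [S.deg_eq hO.1.symm (fun h => S.not_compl_adj_t (h ▸ hO))]
    · rw [S.deg_eq (fun h => S.dbl_not_core hnb hO (Or.inl h)) (S.dbl_ne_t hO)]
  · intro x hx hsx
    simp only [Finset.mem_filter, Finset.mem_univ, true_and]
    exact Or.inl ⟨hx.symm, hsx⟩
  · intro x hx y hxy
    simp only [Finset.mem_filter, Finset.mem_univ, true_and] at hx ⊢
    rcases hx with hx | hx
    · exact Or.inl (hcore x y hx hxy)
    · exact Or.inr ⟨x, hx, hxy⟩
  · intro v _
    simp only [Finset.mem_filter, Finset.mem_univ, true_and]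
    by_contra! hcon
    obtain ⟨⟨u, huv, hvu, -, hu⟩, j, j', h1, h2, h3, h4, h5, h6, h7⟩ := hcon
    exact hu ⟨j, v, j', v, ⟨h1.symm, h2⟩, h5.symm, ⟨h3.symm, h4⟩, h6.symm, ⟨huv.symm, hvu⟩,
      ⟨huv.symm, hvu⟩, Or.inl h7⟩
  · intro u hu v hv huv
    simp only [Finset.mem_filter, Finset.mem_univ, true_and] at hu hv
    exact hcomp u v hu hv huv
  · refine ⟨j₀, by simp only [Finset.mem_filter, Finset.mem_univ, true_and]; exact Or.inl hj₀,
      fun h => hj₀.2 h.symm, fun k hk => ?_⟩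
    simpa using hcore j₀ k hj₀ hk
  · intro x hxO hxD
    simp only [Finset.mem_filter, Finset.mem_univ, true_and, not_or] at hxO hxD
    have hsx : G.Adj s x := by
      have h1 := hxO.1
      rw [compl_adj] at h1
      have h2 : s ≠ x := fun h => hxD.1 (h ▸ hcore_s)
      tauto
    by_cases hst : s = t
    · obtain ⟨j₁, hj, hj₁⟩ := exists_compl_adj G s {j₀} (by
        have := hdeg.2 hst
        rw [Finset.card_singleton]; omega)
      rw [Finset.mem_singleton] at hj
      by_cases h : ∀ k, G.Adj j₀ k → k ≠ s → ¬ Gᶜ.Adj k x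
      · exact hcount x j₀ s hsx hj₀ h hxD.1
      · push Not at h
        obtain ⟨k, hk, -, hkx⟩ := h
        refine hcount x j₁ s hsx hj₁ (fun k₁ hk₁ _ hkx₁ => hxO.2 ?_) hxD.1
        exact ⟨j₁, k₁, j₀, k, hj₁, hk₁, hj₀, hk, hkx₁, hkx, Or.inl hj⟩
    · by_cases h : ∃ k, G.Adj j₀ k ∧ Gᶜ.Adj k x
      · obtain ⟨κ, hκ, hκx⟩ := h
        refine hcount x j₀ κ hsx hj₀ (fun k hk hkκ hkx => hxO.2 ?_) hxD.1
        exact ⟨j₀, k, j₀, κ, hj₀, hk, hj₀, hκ, hkx, hκx, Or.inr ⟨hst, hkκ⟩⟩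
      · push Not at h
        exact hcount x j₀ s hsx hj₀ (fun k hk _ => h k hk) hxD.1
  · intro x hx
    simp only [Finset.mem_filter, Finset.mem_univ, true_and] at hx ⊢
    by_cases hxs : Gᶜ.Adj s x
    · exact Or.inl fun y hxy v hv hvy => hcomp y v (hcore x y hxs hxy) hv hvy.symm
    · have hxd : Dbl G s t x := hx.resolve_left hxs
      have hxc := S.dbl_not_core hnb hxd
      have hsx : G.Adj s x := by
        rw [compl_adj] at hxs
        have h2 : s ≠ x := fun h => hxc (h ▸ hcore_s)
        tauto
      by_contra! hcon
      obtain ⟨⟨y, hxy, y', hy', hne, hyy⟩, hlt⟩ := hcon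
      obtain hy' | ⟨x', hx', hxy'⟩ := hy'
      · exact hyy (S.dbl_nbr_core hxd hxy hy' hne).symm
      have hxs' : ¬ Gᶜ.Adj s x' := by
        intro h
        exact hyy (S.dbl_nbr_core hxd hxy (hcore x' y' h hxy') hne).symm
      have huniq : ∀ k k', G.Adj j₀ k → Gᶜ.Adj k x → G.Adj j₀ k' → Gᶜ.Adj k' x → k = k' :=
        fun k k' h1 h2 h3 h4 => S.dbl_unique hnb hxd hx' hxs hxs' hxy hxy' ⟨hne.symm, hyy⟩
          hj₀ h1 h2 h3 h4
      refine hlt.not_ge ?_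
      by_cases h : ∃ k, G.Adj j₀ k ∧ Gᶜ.Adj k x
      · obtain ⟨κ, hκ, hκx⟩ := h
        exact hcount x j₀ κ hsx hj₀ (fun k hk hkκ hkx => hkκ (huniq k κ hk hkx hκ hκx)) hxc
      · push Not at h
        exact hcount x j₀ s hsx hj₀ (fun k hk _ => h k hk) hxc

end Stuck

/-! ### Stuck graphs with a non-clique neighbourhood -/

namespace Stuck

variable {n : ℕ} {d : Fin n → ℕ} {G : SimpleGraph (Fin n)} {s : Fin n}

/-- A graph with deficiency two at `s` that is stuck, and in which some non-neighbour `j` of `s` has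
two non-adjacent neighbours, contradicts the degree condition. Once the edge `s j` is added, `j`
plays no further role, and the partition is built from the remaining non-neighbours of `s`. -/
theorem false_of_not_clique (S : Stuck d G s s) (δ Δ m : ℕ)
    (hδle : ∀ v, δ ≤ d v) (hΔle : ∀ v, d v ≤ Δ) (hΔn : Δ + 1 ≤ n)
    (hm : 2 * m = ∑ v, d v)
    (hineq : (2 * (m : ℤ) - (n : ℤ) * (δ : ℤ)) * ((n : ℤ) * (Δ : ℤ) - 2 * (m : ℤ)) ≤
      ((Δ : ℤ) - (δ : ℤ)) *
        ((2 * (m : ℤ) - (n : ℤ) * (δ : ℤ)) * ((n : ℤ) - (Δ : ℤ) - 1) +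
          ((n : ℤ) * (Δ : ℤ) - 2 * (m : ℤ)) * (δ : ℤ)))
    {j k k' : Fin n} (hj : Gᶜ.Adj s j) (hjk : G.Adj j k) (hjk' : G.Adj j k')
    (hkk : Gᶜ.Adj k k') : False := by
  classical
  have hds : deg G s + 2 = d s := by
    have := S.dfc s
    simp only [if_true] at this
    omega
  have hdeg : ∀ v, v ≠ s → deg G v = d v := fun v hv => S.deg_eq hv hv
  have hΔs := hΔle s
  obtain ⟨i₀, hi₀j, hi₀⟩ := exists_compl_adj G s {j} (by rw [Finset.card_singleton]; omega)
  rw [Finset.mem_singleton] at hi₀j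
  set Γ : SimpleGraph (Fin n) := G ⊔ fromEdgeSet {s(s, j)} with hΓ
  have hΓadj : ∀ u v, Γ.Adj u v ↔ G.Adj u v ∨ (u = s ∧ v = j) ∨ (u = j ∧ v = s) := by
    intro u v
    have := hj.1
    simp only [hΓ, sup_adj, fromEdgeSet_adj, Set.mem_singleton_iff, Sym2.eq_iff]
    grind
  have hΓdeg : ∀ v, (deg Γ v : ℤ) = deg G v + (if v = s then 1 else 0) + (if v = j then 1 else 0) :=
    deg_add hj.1 hj.2
  -- the core, built from the non-neighbours of `s` other than `j`
  let C : Fin n → Prop := fun v => v = s ∨ ∃ i, Gᶜ.Adj s i ∧ i ≠ j ∧ G.Adj i v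
  let O : Fin n → Prop := fun x => ∃ v, C v ∧ v ≠ x ∧ ¬ Γ.Adj v x
  let D : Fin n → Prop := fun y => y = s ∨ ∃ x, O x ∧ G.Adj x y
  have hCs : C s := Or.inl rfl
  have stem_ne : ∀ i u, Gᶜ.Adj s i → i ≠ j → G.Adj i u → u ≠ k ∧ u ≠ k' := by
    intro i u h1 h2 h3
    refine ⟨fun h => ?_, fun h => ?_⟩
    · exact S.no_two h1 (h ▸ h3) hj hjk' hkk (Or.inl h2)
    · exact S.no_two h1 (h ▸ h3) hj hjk hkk.symm (Or.inl h2)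
  have stem_k : ∀ i u, Gᶜ.Adj s i → i ≠ j → G.Adj i u → ¬ Gᶜ.Adj u k ∧ ¬ Gᶜ.Adj u k' :=
    fun i u h1 h2 h3 => ⟨fun h => S.no_two h1 h3 hj hjk h (Or.inl h2),
      fun h => S.no_two h1 h3 hj hjk' h (Or.inl h2)⟩
  have Cclique : ∀ u v, C u → C v → u ≠ v → G.Adj u v := by
    rintro u v (rfl | ⟨i, hi, hij, hiu⟩) (rfl | ⟨i', hi', hij', hiv⟩) huv
    · exact (huv rfl).elim
    · exact S.adj_of_stem hi' hiv
    · exact (S.adj_of_stem hi hiu).symm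
    · by_contra h
      by_cases hii : i = i'
      · subst hii
        exact S.no_two_loops hj hjk hjk' hkk hi hiu hiv ⟨huv, h⟩ hij.symm
      · exact S.no_two hi hiu hi' hiv ⟨huv, h⟩ (Or.inl hii)
  have CΓ : ∀ v, C v → v ≠ j → Γ.Adj v j := by
    rintro v (rfl | ⟨i, hi, hij, hiv⟩) hvj
    · exact (hΓadj _ _).2 (Or.inr (Or.inl ⟨rfl, rfl⟩))
    · by_contra h
      rw [hΓadj] at h
      exact S.no_three hi hiv hj hjk ⟨hvj, fun h' => h (Or.inl h')⟩ hjk' hkk.symm (Or.inl hij)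
  have O_ne_j : ∀ x, O x → x ≠ j := by
    rintro x ⟨v, hv, hvx, h⟩ rfl
    exact h (CΓ v hv hvx)
  have O_ne_s : ∀ x, O x → x ≠ s := by
    rintro x ⟨v, hv, hvx, h⟩ rfl
    exact h ((hΓadj _ _).2 (Or.inl (Cclique v _ hv hCs hvx)))
  have O_of_compl : ∀ i, Gᶜ.Adj s i → i ≠ j → O i := by
    intro i hi hij
    refine ⟨s, hCs, hi.1, fun h => ?_⟩
    rw [hΓadj] at h
    obtain h | ⟨-, h⟩ | ⟨-, h⟩ := h
    · exact hi.2 h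
    · exact hij h
    · exact hi.1 h.symm
  have O_cases : ∀ x, O x → (Gᶜ.Adj s x ∧ x ≠ j) ∨
      (¬ Gᶜ.Adj s x ∧ Gᶜ.Adj k x ∧ ∃ i u, Gᶜ.Adj s i ∧ i ≠ j ∧ G.Adj i u ∧ Gᶜ.Adj u x) := by
    intro x hx
    have hxj := O_ne_j x hx
    obtain ⟨v, hv, hvx, h⟩ := hx
    by_cases hs : Gᶜ.Adj s x
    · exact Or.inl ⟨hs, hxj⟩
    · refine Or.inr ⟨hs, ?_⟩
      rw [hΓadj] at h
      obtain rfl | ⟨i, hi, hij, hiv⟩ := hv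
      · exact (hs ⟨hvx, fun h' => h (Or.inl h')⟩).elim
      · have hc : Gᶜ.Adj v x := ⟨hvx, fun h' => h (Or.inl h')⟩
        refine ⟨⟨?_, fun hkx => ?_⟩, i, v, hi, hij, hiv, hc⟩
        · rintro rfl
          exact (stem_k i v hi hij hiv).1 hc
        · exact S.no_three hi hiv hj hjk' hc hkx.symm hkk (Or.inl hij)
  have O_nbr : ∀ x y, O x → G.Adj x y → ¬ Gᶜ.Adj s y := by
    intro x y hx hxy hy
    obtain ⟨h1, -⟩ | ⟨h1, h2, i, u, h3, h4, h5, h6⟩ := O_cases x hx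
    · exact S.indep h1 hxy hy
    · by_cases hyj : y = j
      · exact S.no_nbr h3 h5 h6 hxy hy (Or.inl (hyj ▸ h4))
      · exact S.no_nbr hj hjk h2 hxy hy (Or.inl (Ne.symm hyj))
  have O_Γ : ∀ x y, O x → Γ.Adj x y → G.Adj x y := by
    intro x y hx h
    rw [hΓadj] at h
    have h1 := O_ne_j x hx
    have h2 := O_ne_s x hx
    tauto
  have D_ne_j : ∀ y, D y → y ≠ j := by
    rintro y (rfl | ⟨x, hx, hxy⟩) rfl
    · exact hj.1 rfl
    · exact O_nbr x _ hx hxy hj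
  have CD : ∀ v y, C v → D y → v ≠ y → G.Adj v y := by
    rintro v y hv (rfl | ⟨x, hx, hxy⟩) hvy
    · exact Cclique v _ hv hCs hvy
    · obtain ⟨h1, h2⟩ | ⟨h1, h2, -⟩ := O_cases x hx
      · exact Cclique v y hv (Or.inr ⟨x, h1, h2, hxy⟩) hvy
      · by_contra h
        obtain rfl | ⟨i, hi, hij, hiv⟩ := hv
        · exact O_nbr x y hx hxy ⟨hvy, h⟩
        · exact S.no_three hj hjk hi hiv h2 hxy ⟨hvy.symm, fun h' => h h'.symm⟩ (Or.inl hij.symm)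
  have Dclique : ∀ y y', D y → D y' → y ≠ y' → G.Adj y y' := by
    intro y y' hy hy' hne
    by_cases hC : C y
    · exact CD y y' hC hy' hne
    by_cases hC' : C y'
    · exact (CD y' y hC' hy hne.symm).symm
    obtain rfl | ⟨x, hx, hxy⟩ := hy
    · exact (hC hCs).elim
    obtain rfl | ⟨x', hx', hxy'⟩ := hy'
    · exact (hC' hCs).elim
    obtain ⟨h1, h2⟩ | ⟨h1, h2, i, u, h3, h4, h5, h6⟩ := O_cases x hx
    · exact (hC (Or.inr ⟨x, h1, h2, hxy⟩)).elim
    obtain ⟨h1', h2'⟩ | ⟨h1', h2', -⟩ := O_cases x' hx'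
    · exact (hC' (Or.inr ⟨x', h1', h2', hxy'⟩)).elim
    by_contra h
    refine S.no_four h3 h5 hj hjk h1 (O_nbr x y hx hxy) (O_nbr x' y' hx' hxy') h1' h6 hxy
      ⟨hne, h⟩ hxy' h2' (Or.inl h4) ?_
    rw [Ne, Sym2.eq_iff]
    rintro (⟨-, h8⟩ | ⟨h8, -⟩)
    · exact h2.1 h8.symm
    · exact (stem_ne i u h3 h4 h5).1 h8
  have C_D : ∀ v, C v → D v := by
    rintro v (rfl | ⟨i, hi, hij, hiv⟩)
    · exact Or.inl rfl
    · exact Or.inr ⟨i, O_of_compl i hi hij, hiv⟩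
  have hO₀ := O_of_compl i₀ hi₀ hi₀j
  have hO : ∀ v, O v → d v ≤ deg Γ v := by
    intro v hv
    have h1 := hΓdeg v
    have h2 := hdeg v (O_ne_s v hv)
    split_ifs at h1 <;> omega
  refine count_contra d δ Δ m hδle hΔle hΔn hm hineq Γ s
    (Finset.univ.filter D) (Finset.univ.filter D) (Finset.univ.filter O)
    subset_rfl ?_ ?_ ?_ ?_ ?_ ?_ ?_ ?_ ?_ ?_ ?_ ?_
  · simpa using C_D s hCs
  · rw [Finset.disjoint_left]
    intro v
    simp only [Finset.mem_filter, Finset.mem_univ, true_and]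
    rintro hv ⟨w, hw, hwv, h⟩
    exact h ((hΓadj _ _).2 (Or.inl (CD w v hw hv hwv)))
  · have h1 := hΓdeg s
    simp only [if_true, hj.1, if_false] at h1
    omega
  · intro v hv
    simp only [Finset.mem_filter, Finset.mem_univ, true_and] at hv
    have h1 := hΓdeg v
    have h2 := hdeg v
    simp only [D_ne_j v hv, if_false] at h1
    by_cases hvs : v = s
    · subst hvs
      simp only [if_true] at h1
      omega
    · have := h2 hvs
      simp only [hvs, if_false] at h1
      omega
  · intro v hv
    simp only [Finset.mem_filter, Finset.mem_univ, true_and] at hv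
    exact hO v hv
  · intro x hx hsx
    simp only [Finset.mem_filter, Finset.mem_univ, true_and]
    exact ⟨s, hCs, hx.symm, hsx⟩
  · intro x hx y hxy
    simp only [Finset.mem_filter, Finset.mem_univ, true_and] at hx ⊢
    exact Or.inr ⟨x, hx, O_Γ x y hx hxy⟩
  · intro v hv
    simp only [Finset.mem_filter, Finset.mem_univ, true_and] at hv ⊢
    by_cases hC : C v
    · exact Or.inl fun u huv hvu => ⟨v, hC, huv.symm, hvu⟩
    · refine Or.inr fun i _ h1 h2 _ _ h3 _ => (hC ?_).elim
      rw [hΓadj] at h2 h3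
      have h4 := D_ne_j v hv
      have h5 : v ≠ s := fun h => hC (Or.inl h)
      exact Or.inr ⟨i, ⟨h1.symm, fun h => h2 (Or.inl h)⟩, fun h => h2 (Or.inr (Or.inl ⟨rfl, h⟩)),
        by have := G.adj_comm i v; tauto⟩
  · intro u hu v hv huv
    simp only [Finset.mem_filter, Finset.mem_univ, true_and] at hu hv
    exact (hΓadj _ _).2 (Or.inl (Dclique u v hu hv huv))
  · refine ⟨i₀, by simpa using hO₀, fun h => hi₀.2 (O_Γ i₀ s hO₀ h).symm, fun v hv => ?_⟩
    simpa using Or.inr ⟨i₀, hO₀, O_Γ i₀ v hO₀ hv⟩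
  · intro x hxO hxD
    simp only [Finset.mem_filter, Finset.mem_univ, true_and] at hxO hxD
    have hall : ∀ v, C v → Γ.Adj v x := by
      intro v hv
      by_contra h
      exact hxO ⟨v, hv, fun e => hxD (e ▸ C_D v hv), h⟩
    refine ((hδle i₀).trans (hO i₀ hO₀)).trans (card_filter_ge Γ (s := s) (κ := s) _
      (by simpa using C_D s hCs) (fun v hv => ?_) (fun h => hi₀.2 (O_Γ i₀ s hO₀ h).symm)
      (hall s hCs) fun v hv _ => hall v (Or.inr ⟨i₀, hi₀, hi₀j, O_Γ i₀ v hO₀ hv⟩))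
    simpa using Or.inr ⟨i₀, hO₀, O_Γ i₀ v hO₀ hv⟩
  · intro x hx
    simp only [Finset.mem_filter, Finset.mem_univ, true_and] at hx ⊢
    exact Or.inl fun y hxy v hv hvy => (hΓadj _ _).2
      (Or.inl (Dclique y v (Or.inr ⟨x, hx, O_Γ x y hx hxy⟩) hv hvy.symm))

end Stuck

/-! ### Conclusion -/

/-- Under the degree condition, a graph whose deficient vertices coincide or are adjacent twins is
within JS distance five of a realization. -/
theorem reach_of_twin {n : ℕ} (d : Fin n → ℕ) (δ Δ m : ℕ)
    (hδle : ∀ v, δ ≤ d v) (hΔle : ∀ v, d v ≤ Δ) (hΔn : Δ + 1 ≤ n)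
    (hm : 2 * m = ∑ v, d v)
    (hineq : (2 * (m : ℤ) - (n : ℤ) * (δ : ℤ)) * ((n : ℤ) * (Δ : ℤ) - 2 * (m : ℤ)) ≤
      ((Δ : ℤ) - (δ : ℤ)) *
        ((2 * (m : ℤ) - (n : ℤ) * (δ : ℤ)) * ((n : ℤ) - (Δ : ℤ) - 1) +
          ((n : ℤ) * (Δ : ℤ) - 2 * (m : ℤ)) * (δ : ℤ)))
    {G : SimpleGraph (Fin n)} {s t : Fin n} (h : Dfc d G s t) (hadj : s = t ∨ G.Adj s t)
    (htwin : ∀ x, Gᶜ.Adj s x ↔ Gᶜ.Adj t x) : Reach d 5 G := by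
  by_contra hN
  have S : Stuck d G s t := ⟨h, hN, hadj, htwin⟩
  refine S.false_of_clique δ Δ m hδle hΔle hΔn hm hineq fun j k k' hj hjk hjk' hkk => ?_
  by_cases hst : s = t
  · subst hst
    exact S.false_of_not_clique δ Δ m hδle hΔle hΔn hm hineq hj hjk hjk' hkk
  · exact S.no_two hj hjk hj hjk' hkk (Or.inr hst)

/-- Corollary 3.2. If
`(2m − nδ)(nΔ − 2m) ≤ (Δ − δ)[(2m − nδ)(n − Δ − 1) + (nΔ − 2m)δ]`,
where `δ`, `Δ` are the minimum and maximum entries of the graphical degree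
sequence `d` and `2m = Σ dᵢ`, then `k_JS(d) ≤ 6`. -/
theorem stmt1 {n : ℕ} (d : Fin n → ℕ) (δ Δ m : ℕ)
    (hdpos : ∀ v, 1 ≤ d v)
    (hgraphical : ∃ H : SimpleGraph (Fin n), memG d H)
    (hδle : ∀ v, δ ≤ d v) (hδeq : ∃ v, d v = δ)
    (hΔle : ∀ v, d v ≤ Δ) (hΔeq : ∃ v, d v = Δ)
    (hm : 2 * m = ∑ v, d v)
    (hineq : (2 * (m : ℤ) - (n : ℤ) * (δ : ℤ)) * ((n : ℤ) * (Δ : ℤ) - 2 * (m : ℤ)) ≤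
      ((Δ : ℤ) - (δ : ℤ)) *
        ((2 * (m : ℤ) - (n : ℤ) * (δ : ℤ)) * ((n : ℤ) - (Δ : ℤ) - 1) +
          ((n : ℤ) * (Δ : ℤ) - 2 * (m : ℤ)) * (δ : ℤ))) :
    ∀ G : SimpleGraph (Fin n), memG' d G →
      ∃ H : SimpleGraph (Fin n), memG d H ∧ jsDistLe d 6 G H := by
  intro G hG
  change Reach d 6 G
  have hΔn : Δ + 1 ≤ n := by
    classical
    obtain ⟨H, hH⟩ := hgraphical
    obtain ⟨v, hv⟩ := hΔeq
    have h1 := hH v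
    rw [deg_eq_degree] at h1
    have h2 := H.degree_lt_card_verts v
    rw [Fintype.card_fin] at h2
    omega
  by_cases hmem : memG d G
  · exact (Reach.zero hmem).mono (by omega)
  obtain ⟨s, t, h⟩ := exists_Dfc hm hG hmem
  by_cases hst : s = t
  · subst hst
    exact (reach_of_twin d δ Δ m hδle hΔle hΔn hm hineq h (Or.inl rfl) fun _ => Iff.rfl).mono
      (by omega)
  by_cases hadj : G.Adj s t
  swap
  · exact (reach_of_join h hst hadj).mono (by omega)
  -- if `j` is adjacent to exactly one of `s`, `t`, one move along `j` collects both units of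
  -- deficit at the same vertex
  have move : ∀ a b j, Dfc d G a b → Gᶜ.Adj a j → G.Adj j b → Reach d 6 G :=
    fun a b j hab h1 h2 => reach_of_move hab h1.1 h1.2 h2 fun hb =>
      reach_of_twin d δ Δ m hδle hΔle hΔn hm hineq hb (Or.inl rfl) fun _ => Iff.rfl
  by_cases htwin : ∀ x, Gᶜ.Adj s x ↔ Gᶜ.Adj t x
  · exact (reach_of_twin d δ Δ m hδle hΔle hΔn hm hineq h (Or.inr hadj) htwin).mono (by omega)
  · push Not at htwin
    obtain ⟨x, ⟨h1, h2⟩ | ⟨h1, h2⟩⟩ := htwin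
    · refine move s t x h h1 ?_
      rw [compl_adj] at h1 h2
      have hne : t ≠ x := by rintro rfl; exact h1.2 hadj
      have := G.adj_comm x t
      tauto
    · refine move t s x h.symm h2 ?_
      rw [compl_adj] at h1 h2
      have hne : s ≠ x := by rintro rfl; exact h2.2 hadj.symm
      have := G.adj_comm x s
      tauto
end

section
/- Let d = (d_1,…,d_n) be a graphical degree sequence with minimum entry δ and maximum entry Δ. If (Δ − δ + 1)² ≤ 4δ(n − Δ − 1), then for every graph G ∈ G''(d) \ G(d), with u its surplus-one node and v its deficit-one node, there exists in G an alternating path of even length at most 10 from u to v, starting with an edge and ending with a co-edge. -/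
/-!
Suppose `G` has no alternating path of length 2, 4 or 6 from `u` to `v`; a double count of the pairs
between two disjoint vertex sets then contradicts the stability inequality, so in fact a path of
length at most 6 exists. Write `s = n - Δ - 1`, the number of co-neighbours of a vertex of degree `Δ`.

Let `X` be the set of neighbours of `u` other than `v`, and `Y` the set of co-neighbours of `v` other
than `u`; so `|X| ≥ δ` and `|Y| ≥ s`. Let `P` be the set of co-neighbours of `X` and `Q` the set of
neighbours of `Y`. Absence of paths of length 2 and 4 gives `X ∩ Y = ∅` and `P ∩ Q = ∅`. Put

* `S = {v} ∪ X ∪ (N(P) \ (P ∪ {u}))`,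
* `T = {u} ∪ Y ∪ (coN(Q) \ (Q ∪ {v}))`.

Removing `P` and `Q` eliminates the walks `u, x, p, w, q, y, v` of length 6 with `x = q` or
`p = y`, the only ones that are not paths (`walk6`), so absence of paths of length 6 gives
`S ∩ T = ∅` (`disjoint_S`). Moreover every `t ∈ T` has at least `δ` neighbours in `S` (`row_bound`),
with at least `δ + 1` for `t = u`, and dually every `a ∈ S` has at least `s` co-neighbours in `T`.
Counting edges and co-edges between `S` and `T`,
`δ |T| + s |S| < |S| |T|`, that is `(|S| - δ) (|T| - s) > δ s`. Since `|S| + |T| ≤ n`, the AM-GM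
inequality gives `(Δ - δ + 1)² > 4 δ s`.

Complementing `G` and exchanging `u` with `v` exchanges `X, P, S` with `Y, Q, T` and `δ` with `s`, so
only one half of each dual pair of statements is proved; `Y`, `Q`, `T` are written as
`nbX Gᶜ v u`, `coP Gᶜ v u`, `setS Gᶜ v u`.
-/

open SimpleGraph
open scoped symmDiff

/-- An alternating path of length `q` from `u` to `v` in `G`: a sequence of
`q+1` distinct vertices starting at `u` and ending at `v` such that
consecutive pairs are edges at even positions and co-edges at odd positions
(so it starts with an edge and, if `q` is even, ends with a co-edge). -/
def altPath {n : ℕ} (G : SimpleGraph (Fin n)) (u v : Fin n) (q : ℕ) : Prop :=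
  ∃ w : ℕ → Fin n, w 0 = u ∧ w q = v ∧
    (∀ i j, i ≤ q → j ≤ q → w i = w j → i = j) ∧
    (∀ i < q, (Even i → G.Adj (w i) (w (i+1))) ∧ (¬ Even i → ¬ G.Adj (w i) (w (i+1))))

/-! ### The vertex sets `X`, `P`, `S` -/

open Classical in
/-- The neighbours of `w` lying in `A`. -/
noncomputable def nbIn {n : ℕ} (G : SimpleGraph (Fin n)) (A : Finset (Fin n)) (w : Fin n) :
    Finset (Fin n) :=
  A.filter (G.Adj w)

open Classical in
/-- The neighbours of `u` other than `v`. -/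
noncomputable def nbX {n : ℕ} (G : SimpleGraph (Fin n)) (u v : Fin n) : Finset (Fin n) :=
  Finset.univ.filter (fun x => G.Adj u x ∧ x ≠ v)

open Classical in
/-- The vertices having a co-neighbour in `nbX G u v`. -/
noncomputable def coP {n : ℕ} (G : SimpleGraph (Fin n)) (u v : Fin n) : Finset (Fin n) :=
  Finset.univ.filter (fun b => ∃ a ∈ nbX G u v, Gᶜ.Adj a b)

open Classical in
/-- The set `S`: the vertex `v`, the set `X = nbX G u v`, and the neighbours of `P = coP G u v`
lying outside `P ∪ {u}`. -/
noncomputable def setS {n : ℕ} (G : SimpleGraph (Fin n)) (u v : Fin n) : Finset (Fin n) :=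
  Finset.univ.filter (fun w => w = v ∨ w ∈ nbX G u v ∨
    (w ≠ u ∧ w ∉ coP G u v ∧ ∃ p ∈ coP G u v, G.Adj p w))

/-- The vertices `u` and `v` are distinct, and there is no alternating path of length 2, 4 or 6 from
`u` to `v`. -/
structure NoPath {n : ℕ} (G : SimpleGraph (Fin n)) (u v : Fin n) : Prop where
  ne : u ≠ v
  two : ∀ x, G.Adj u x → Gᶜ.Adj x v → False
  four : ∀ x p y, [u, x, p, y, v].Nodup →
    G.Adj u x → Gᶜ.Adj x p → G.Adj p y → Gᶜ.Adj y v → False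
  six : ∀ x p w q y, [u, x, p, w, q, y, v].Nodup →
    G.Adj u x → Gᶜ.Adj x p → G.Adj p w → Gᶜ.Adj w q → G.Adj q y → Gᶜ.Adj y v → False

section
variable {n : ℕ} {G : SimpleGraph (Fin n)} {u v : Fin n}

theorem mem_nbIn {A : Finset (Fin n)} {w x : Fin n} : x ∈ nbIn G A w ↔ x ∈ A ∧ G.Adj w x := by
  simp [nbIn]

theorem mem_nb {w x : Fin n} : x ∈ nbIn G Finset.univ w ↔ G.Adj w x := by simp [nbIn]

theorem mem_nbX {x : Fin n} : x ∈ nbX G u v ↔ G.Adj u x ∧ x ≠ v := by simp [nbX]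

theorem mem_coP {b : Fin n} : b ∈ coP G u v ↔ ∃ a ∈ nbX G u v, Gᶜ.Adj a b := by simp [coP]

theorem mem_setS {w : Fin n} : w ∈ setS G u v ↔ w = v ∨ w ∈ nbX G u v ∨
    (w ≠ u ∧ w ∉ coP G u v ∧ ∃ p ∈ coP G u v, G.Adj p w) := by simp [setS]

theorem mem_nbX' {y : Fin n} : y ∈ nbX Gᶜ v u ↔ Gᶜ.Adj y v ∧ y ≠ u := by
  rw [mem_nbX, Gᶜ.adj_comm]

theorem mem_coP' {b : Fin n} : b ∈ coP Gᶜ v u ↔ ∃ y ∈ nbX Gᶜ v u, G.Adj b y := by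
  simp [mem_coP, G.adj_comm]

/-! ### Disjointness of the sets -/

/-- The hypothesis is self-dual: a path read backwards in the complement is a path of the same
kind. -/
theorem NoPath.dual (h : NoPath G u v) : NoPath Gᶜ v u where
  ne := h.ne.symm
  two x h1 h2 := by
    rw [compl_compl] at h2
    exact h.two x h2.symm h1.symm
  four x p y hn h1 h2 h3 h4 := by
    rw [compl_compl] at h2 h4
    exact h.four y p x (by simpa using List.nodup_reverse.2 hn) h4.symm h3.symm h2.symm h1.symm
  six x p w q y hn h1 h2 h3 h4 h5 h6 := by
    rw [compl_compl] at h2 h4 h6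
    exact h.six y q w p x (by simpa using List.nodup_reverse.2 hn)
      h6.symm h5.symm h4.symm h3.symm h2.symm h1.symm

/-- `X ∩ Y = ∅`. -/
theorem NoPath.XY (h : NoPath G u v) {x : Fin n} (h1 : x ∈ nbX G u v) (h2 : x ∈ nbX Gᶜ v u) :
    False :=
  h.two x (mem_nbX.1 h1).1 (mem_nbX'.1 h2).1

theorem NoPath.v_notMem_P (h : NoPath G u v) : v ∉ coP G u v := by
  intro hv
  obtain ⟨a, ha, hav⟩ := mem_coP.1 hv
  exact h.two a (mem_nbX.1 ha).1 hav

theorem u_notMem_P : u ∉ coP G u v := by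
  intro hu
  obtain ⟨a, ha, hau⟩ := mem_coP.1 hu
  exact ((G.compl_adj a u).1 hau).2 (mem_nbX.1 ha).1.symm

/-- `P ∩ Q = ∅`. -/
theorem NoPath.PQ (h : NoPath G u v) {b : Fin n} (h1 : b ∈ coP G u v) (h2 : b ∈ coP Gᶜ v u) :
    False := by
  have hbv : b ≠ v := fun e => h.v_notMem_P (e ▸ h1)
  have hbu : b ≠ u := fun e => u_notMem_P (e ▸ h1)
  obtain ⟨a, ha, hab⟩ := mem_coP.1 h1
  obtain ⟨y, hy, hby⟩ := mem_coP'.1 h2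
  have hay : a ≠ y := fun e => h.XY ha (e ▸ hy)
  rw [mem_nbX] at ha
  rw [mem_nbX'] at hy
  refine h.four a b y ?_ ha.1 hab hby hy.1
  have := h.ne
  have := ha.1.ne
  have := hab.ne
  have := hby.ne
  have := hy.1.ne
  simp only [List.nodup_cons, List.mem_cons, List.not_mem_nil, List.nodup_nil]
  grind

/-- `X` is complete to `Q`. -/
theorem NoPath.X_Q (h : NoPath G u v) {x q : Fin n} (hx : x ∈ nbX G u v) (hq : q ∈ coP Gᶜ v u)
    (hxq : Gᶜ.Adj x q) : False :=
  h.PQ (mem_coP.2 ⟨x, hx, hxq⟩) hq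

/-- There are no edges between `Y` and `P`. -/
theorem NoPath.Y_P (h : NoPath G u v) {y p : Fin n} (hy : y ∈ nbX Gᶜ v u) (hp : p ∈ coP G u v)
    (hpy : G.Adj p y) : False :=
  h.PQ hp (mem_coP'.2 ⟨y, hy, hpy⟩)

/-- When `w` is neither `u` nor `v`, an alternating walk `u, x, p, w, q, y, v` of length 6 can fail to
be a path only by having `x = q` or `p = y`. -/
theorem NoPath.walk6 (h : NoPath G u v) {x p w q y : Fin n} (hx : x ∈ nbX G u v)
    (hxp : Gᶜ.Adj x p) (hpw : G.Adj p w) (hwq : Gᶜ.Adj w q) (hqy : G.Adj q y)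
    (hy : y ∈ nbX Gᶜ v u) (hwu : w ≠ u) (hwv : w ≠ v) : x = q ∨ p = y := by
  by_contra! hne
  have hp : p ∈ coP G u v := mem_coP.2 ⟨x, hx, hxp⟩
  have hq : q ∈ coP Gᶜ v u := mem_coP'.2 ⟨y, hy, hqy⟩
  have h1 : p ≠ v := fun e => h.v_notMem_P (e ▸ hp)
  have h2 : p ≠ u := fun e => u_notMem_P (e ▸ hp)
  have h3 : q ≠ u := fun e => h.dual.v_notMem_P (e ▸ hq)
  have h4 : q ≠ v := fun e => u_notMem_P (e ▸ hq)
  have h5 : x ≠ y := fun e => h.XY hx (e ▸ hy)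
  have h6 : p ≠ q := fun e => h.PQ hp (e ▸ hq)
  have h7 : x ≠ w := fun e => h.X_Q hx hq (e ▸ hwq)
  have h8 : w ≠ y := fun e => h.Y_P hy hp (e ▸ hpw)
  rw [mem_nbX] at hx
  rw [mem_nbX'] at hy
  refine h.six x p w q y ?_ hx.1 hxp hpw hwq hqy hy.1
  have := h.ne
  have := hx.1.ne
  have := hxp.ne
  have := hpw.ne
  have := hwq.ne
  have := hqy.ne
  have := hy.1.ne
  simp only [List.nodup_cons, List.mem_cons, List.not_mem_nil, List.nodup_nil]
  grind

theorem u_notMem_S (h : u ≠ v) : u ∉ setS G u v := by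
  rw [mem_setS, mem_nbX]
  rintro (e | ⟨e, -⟩ | ⟨e, -⟩)
  · exact h e
  · exact G.loopless.irrefl u e
  · exact e rfl

theorem mem_T {w : Fin n} : w ∈ setS Gᶜ v u ↔ w = u ∨ w ∈ nbX Gᶜ v u ∨
    (w ≠ v ∧ w ∉ coP Gᶜ v u ∧ ∃ q ∈ coP Gᶜ v u, Gᶜ.Adj w q) := by
  simp only [mem_setS, Gᶜ.adj_comm]

/-- `X ∩ T = ∅`. -/
theorem NoPath.X_T (h : NoPath G u v) {x : Fin n} (hx : x ∈ nbX G u v) : x ∉ setS Gᶜ v u := by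
  rw [mem_T]
  rintro (e | e | ⟨-, -, q, hq, hxq⟩)
  · exact (mem_nbX.1 hx).1.ne e.symm
  · exact h.XY hx e
  · exact h.X_Q hx hq hxq

theorem NoPath.disjoint_S (h : NoPath G u v) : Disjoint (setS G u v) (setS Gᶜ v u) := by
  rw [Finset.disjoint_left]
  intro w hS hT
  have hwu : w ≠ u := fun e => u_notMem_S h.ne (e ▸ hS)
  have hwv : w ≠ v := fun e => u_notMem_S h.ne.symm (e ▸ hT)
  have hX : w ∉ nbX G u v := fun e => h.X_T e hT
  have hY : w ∉ nbX Gᶜ v u := fun e => h.dual.X_T e (by rwa [compl_compl])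
  obtain ⟨-, hwP, p, hp, hpw⟩ := ((mem_setS.1 hS).resolve_left hwv).resolve_left hX
  obtain ⟨-, hwQ, q, hq, hwq⟩ := ((mem_T.1 hT).resolve_left hwu).resolve_left hY
  obtain ⟨x, hx, hxp⟩ := mem_coP.1 hp
  obtain ⟨y, hy, hqy⟩ := mem_coP'.1 hq
  rcases h.walk6 hx hxp hpw hwq hqy hy hwu hwv with e | e
  · exact hwP (mem_coP.2 ⟨x, hx, e ▸ hwq.symm⟩)
  · exact hwQ (mem_coP'.2 ⟨y, hy, e ▸ hpw.symm⟩)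

/-! ### Neighbours of `T` in `S` -/

/-- Every neighbour of `u` lies in `S`. -/
theorem row_u : nbIn G Finset.univ u ⊆ nbIn G (setS G u v) u := by
  intro w hw
  have hw : G.Adj u w := mem_nb.1 hw
  rw [mem_nbIn, mem_setS, mem_nbX]
  by_cases e : w = v <;> simp [e, hw]
  exact e ▸ hw

/-- Every vertex of `T` other than `u` has at least `δ` neighbours in `S`. A vertex outside `P` is
adjacent to all of `X`. A vertex of `P` has its whole neighbourhood in `S`, unless it has a neighbour
in `P`; in that case it is adjacent to `v` and to all of `Q` but at most one vertex. -/
theorem NoPath.row_bound (h : NoPath G u v) {δ : ℕ}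
    (hdeg : ∀ w, w ≠ v → δ ≤ (nbIn G Finset.univ w).card)
    (hX : δ ≤ (nbX G u v).card) (hY : (nbX Gᶜ v u).Nonempty)
    {t : Fin n} (ht : t ∈ setS Gᶜ v u) (htu : t ≠ u) :
    δ ≤ (nbIn G (setS G u v) t).card := by
  have htv : t ≠ v := fun e => u_notMem_S h.ne.symm (e ▸ ht)
  have htX : t ∉ nbX G u v := fun e => h.X_T e ht
  have hnu : ¬ G.Adj t u := fun e => htX (mem_nbX.2 ⟨e.symm, htv⟩)
  by_cases htP : t ∈ coP G u v
  swap
  · refine hX.trans (Finset.card_le_card fun x hx => mem_nbIn.2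
      ⟨mem_setS.2 (Or.inr (Or.inl hx)), ?_⟩)
    by_contra hn
    refine htP (mem_coP.2 ⟨x, hx, (G.compl_adj x t).2 ⟨?_, fun e => hn e.symm⟩⟩)
    rintro rfl
    exact htX hx
  by_cases hw : ∃ w ∈ coP G u v, G.Adj t w
  swap
  · refine (hdeg t htv).trans (Finset.card_le_card fun w hw' => ?_)
    have hw' : G.Adj t w := mem_nb.1 hw'
    refine mem_nbIn.2 ⟨mem_setS.2 (Or.inr (Or.inr ⟨?_, fun e => hw ⟨w, e, hw'⟩,
      t, htP, hw'⟩)), hw'⟩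
    rintro rfl
    exact hnu hw'
  obtain ⟨w, hwP, htw⟩ := hw
  have htY : t ∉ nbX Gᶜ v u := fun e => h.Y_P e hwP htw.symm
  obtain ⟨-, htQ, -⟩ := ((mem_T.1 ht).resolve_left htu).resolve_left htY
  have hadjv : G.Adj t v := by
    by_contra hn
    exact htY (mem_nbX'.2 ⟨(G.compl_adj t v).2 ⟨htv, hn⟩, htu⟩)
  obtain ⟨x, hx, hxw⟩ := mem_coP.1 hwP
  -- the only vertex of `Q` that can fail to be adjacent to `t` is `x`
  have hQ : ∀ q ∈ coP Gᶜ v u, q ≠ x → G.Adj t q := by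
    intro q hq hqx
    by_contra hn
    have htq : Gᶜ.Adj t q := (G.compl_adj t q).2 ⟨fun e => htQ (e ▸ hq), hn⟩
    obtain ⟨y, hy, hqy⟩ := mem_coP'.1 hq
    rcases h.walk6 hx hxw htw.symm htq hqy hy htu htv with e | e
    · exact hqx e.symm
    · exact htQ (mem_coP'.2 ⟨y, hy, e ▸ htw⟩)
  have hvQ : v ∉ coP Gᶜ v u := u_notMem_P
  have hsub : insert v ((coP Gᶜ v u).erase x) ⊆ nbIn G (setS G u v) t := by
    intro q hq
    rcases Finset.mem_insert.1 hq with rfl | hq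
    · exact mem_nbIn.2 ⟨mem_setS.2 (Or.inl rfl), hadjv⟩
    · obtain ⟨hqx, hq⟩ := Finset.mem_erase.1 hq
      have htq := hQ q hq hqx
      refine mem_nbIn.2 ⟨mem_setS.2 (Or.inr (Or.inr ⟨?_, fun e => h.PQ e hq,
        t, htP, htq⟩)), htq⟩
      rintro rfl
      exact hnu htq
  have hcard := Finset.card_le_card hsub
  rw [Finset.card_insert_of_notMem (fun e => hvQ (Finset.mem_of_mem_erase e))] at hcard
  have herase := Finset.pred_card_le_card_erase (s := coP Gᶜ v u) (a := x)
  -- `Q` contains the neighbourhood of any vertex of `Y`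
  obtain ⟨y, hy⟩ := hY
  have hQcard : δ ≤ (coP Gᶜ v u).card := by
    refine (hdeg y (mem_nbX'.1 hy).1.ne).trans (Finset.card_le_card fun q hq => ?_)
    have hq : G.Adj y q := mem_nb.1 hq
    exact mem_coP'.2 ⟨y, hy, hq.symm⟩
  omega

/-! ### Double counting -/

/-- No pair in `B × A` is both an edge and a co-edge, so the two counts sum to at most `|A| |B|`. -/
theorem count_pairs (A B : Finset (Fin n)) :
    ∑ t ∈ B, (nbIn G A t).card + ∑ a ∈ A, (nbIn Gᶜ B a).card ≤
      A.card * B.card := by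
  have h1 : ∑ a ∈ A, (nbIn Gᶜ B a).card = ∑ t ∈ B, (nbIn Gᶜ A t).card := by
    classical
    simp only [nbIn, Finset.card_filter]
    rw [Finset.sum_comm]
    simp only [Gᶜ.adj_comm]
    congr!
  rw [h1, ← Finset.sum_add_distrib, mul_comm, ← smul_eq_mul]
  refine Finset.sum_le_card_nsmul _ _ _ fun t _ => ?_
  rw [← Finset.card_union_of_disjoint]
  · exact Finset.card_le_card (Finset.union_subset (fun _ h => (mem_nbIn.1 h).1)
      (fun _ h => (mem_nbIn.1 h).1))
  · rw [Finset.disjoint_left]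
    intro a ha ha'
    exact ((G.compl_adj t a).1 (mem_nbIn.1 ha').2).2 (mem_nbIn.1 ha).2

theorem card_nbX_add_one : (nbIn G Finset.univ u).card ≤ (nbX G u v).card + 1 := by
  refine (Finset.card_le_card (t := insert v (nbX G u v)) fun w hw => ?_).trans
    (Finset.card_insert_le _ _)
  have hw : G.Adj u w := mem_nb.1 hw
  rw [Finset.mem_insert, mem_nbX]
  tauto

theorem deg_eq_card (w : Fin n) : deg G w = (nbIn G Finset.univ w).card := by
  rw [deg, ← Set.ncard_coe_finset]
  congr 1
  ext
  simp [nbIn]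

theorem card_compl_nb (w : Fin n) :
    (nbIn Gᶜ Finset.univ w).card + (nbIn G Finset.univ w).card + 1 = n := by
  have hw : w ∉ nbIn Gᶜ Finset.univ w ∪ nbIn G Finset.univ w := by simp [nbIn]
  have hdis : Disjoint (nbIn Gᶜ Finset.univ w) (nbIn G Finset.univ w) := by
    rw [Finset.disjoint_left]
    intro a ha ha'
    exact ((G.compl_adj w a).1 (mem_nb.1 ha)).2 (mem_nb.1 ha')
  rw [← Finset.card_union_of_disjoint hdis, ← Finset.card_insert_of_notMem hw]
  have huniv : insert w (nbIn Gᶜ Finset.univ w ∪ nbIn G Finset.univ w) = Finset.univ := by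
    ext x
    simp only [Finset.mem_insert, Finset.mem_union, mem_nb, SimpleGraph.compl_adj,
      Finset.mem_univ, iff_true]
    by_cases e : x = w
    · exact Or.inl e
    · have := Ne.symm e
      tauto
  rw [huniv, Finset.card_univ, Fintype.card_fin]

/-- Summed form of `row_bound`, the surplus at `u` supplying the extra `1`. -/
theorem NoPath.sum_bound (h : NoPath G u v) {δ : ℕ}
    (hdeg : ∀ w, w ≠ v → δ ≤ (nbIn G Finset.univ w).card)
    (hu : δ + 1 ≤ (nbIn G Finset.univ u).card) (hY : (nbX Gᶜ v u).Nonempty) :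
    δ * (setS Gᶜ v u).card + 1 ≤
      ∑ t ∈ setS Gᶜ v u, (nbIn G (setS G u v) t).card := by
  have hX : δ ≤ (nbX G u v).card := by
    have := card_nbX_add_one (G := G) (u := u) (v := v)
    omega
  have huT : u ∈ setS Gᶜ v u := mem_T.2 (Or.inl rfl)
  have hlt : ∑ _t ∈ setS Gᶜ v u, δ <
      ∑ t ∈ setS Gᶜ v u, (nbIn G (setS G u v) t).card := by
    have hrow : δ < (nbIn G (setS G u v) u).card :=
      lt_of_lt_of_le hu (Finset.card_le_card row_u)
    refine Finset.sum_lt_sum (fun t ht => ?_) ⟨u, huT, hrow⟩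
    by_cases e : t = u
    · rw [e]
      exact hrow.le
    · exact h.row_bound hdeg hX hY ht e
  rw [Finset.sum_const, smul_eq_mul, mul_comm] at hlt
  exact hlt

/-- `S` contains `X` and the further vertex `v`. -/
theorem card_setS : (nbX G u v).card + 1 ≤ (setS G u v).card := by
  have hv : v ∉ nbX G u v := fun e => (mem_nbX.1 e).2 rfl
  rw [← Finset.card_insert_of_notMem hv]
  refine Finset.card_le_card fun w hw => mem_setS.2 ?_
  rcases Finset.mem_insert.1 hw with e | e
  · exact Or.inl e
  · exact Or.inr (Or.inl e)

/-- The contradiction, with degree hypotheses in self-dual form: `s` bounds co-degrees from below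
as `δ` bounds degrees. -/
theorem NoPath.false (h : NoPath G u v) {δ s : ℕ} (hs : 1 ≤ s)
    (hδ : 1 ≤ δ) (hdeg : ∀ w, w ≠ v → δ ≤ (nbIn G Finset.univ w).card)
    (hcodeg : ∀ w, w ≠ u → s ≤ (nbIn Gᶜ Finset.univ w).card)
    (hu : δ + 1 ≤ (nbIn G Finset.univ u).card)
    (hv : s + 1 ≤ (nbIn Gᶜ Finset.univ v).card)
    (hineq : ((n : ℤ) - δ - s) ^ 2 ≤ 4 * (δ : ℤ) * s) : False := by
  have hX : δ ≤ (nbX G u v).card := by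
    have := card_nbX_add_one (G := G) (u := u) (v := v)
    omega
  have hY : s ≤ (nbX Gᶜ v u).card := by
    have := card_nbX_add_one (G := Gᶜ) (u := v) (v := u)
    omega
  have hrow := h.sum_bound hdeg hu (Finset.card_pos.1 (by omega))
  have hcol := h.dual.sum_bound hcodeg hv (Finset.card_pos.1 (by rw [compl_compl]; omega))
  rw [compl_compl] at hcol
  have hpairs := count_pairs (G := G) (setS G u v) (setS Gᶜ v u)
  have hS := card_setS (G := G) (u := u) (v := v)
  have hT := card_setS (G := Gᶜ) (u := v) (v := u)
  have hn : (setS G u v).card + (setS Gᶜ v u).card ≤ n := by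
    rw [← Finset.card_union_of_disjoint h.disjoint_S]
    simpa using Finset.card_le_univ (setS G u v ∪ setS Gᶜ v u)
  generalize (setS G u v).card = a at *
  generalize (setS Gᶜ v u).card = b at *
  have hprod : (δ : ℤ) * s < ((a : ℤ) - δ) * ((b : ℤ) - s) := by
    have : δ * b + s * a + 2 ≤ a * b := by omega
    zify at this
    linarith
  have ha : (0 : ℤ) < (a : ℤ) - δ := by omega
  have hb : (0 : ℤ) < (b : ℤ) - s := by omega
  have hsum : ((a : ℤ) - δ) + ((b : ℤ) - s) ≤ (n : ℤ) - δ - s := by omega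
  have hsq : (((a : ℤ) - δ) + ((b : ℤ) - s)) ^ 2 ≤ ((n : ℤ) - δ - s) ^ 2 :=
    pow_le_pow_left₀ (by omega) hsum 2
  -- AM-GM
  have := sq_nonneg (((a : ℤ) - δ) - ((b : ℤ) - s))
  linarith

/-! ### Alternating paths as lists -/

/-- Presents an alternating path by the list of its vertices. -/
theorem altPath_of_list (l : List (Fin n)) (q : ℕ) (hl : l.length = q + 1) (hn : l.Nodup)
    (h0 : l.getD 0 u = u) (hq : l.getD q u = v)
    (hadj : ∀ i < q, (Even i → G.Adj (l.getD i u) (l.getD (i + 1) u)) ∧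
      (¬ Even i → ¬ G.Adj (l.getD i u) (l.getD (i + 1) u))) : altPath G u v q := by
  refine ⟨fun i => l.getD i u, h0, hq, fun i j hi hj hij => ?_, hadj⟩
  simp only at hij
  rw [List.getD_eq_getElem _ _ (by omega), List.getD_eq_getElem _ _ (by omega)] at hij
  exact (hn.getElem_inj_iff).1 hij

theorem noPath_of_not_altPath (hne : u ≠ v)
    (hno : ¬ ∃ q, Even q ∧ q ≤ 10 ∧ altPath G u v q) : NoPath G u v where
  ne := hne
  two x h1 h2 := by
    refine hno ⟨2, by decide, by omega, altPath_of_list [u, x, v] 2 rfl ?_ rfl rfl ?_⟩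
    · have := h1.ne
      have := h2.ne
      simp only [List.nodup_cons, List.mem_cons, List.not_mem_nil, List.nodup_nil]
      grind
    · rw [SimpleGraph.compl_adj] at h2
      intro i hi
      interval_cases i <;> simp_all [Nat.even_iff]
  four x p y hn h1 h2 h3 h4 := by
    refine hno ⟨4, by decide, by omega, altPath_of_list [u, x, p, y, v] 4 rfl hn rfl rfl ?_⟩
    rw [SimpleGraph.compl_adj] at h2 h4
    clear hn
    intro i hi
    interval_cases i <;> simp_all [Nat.even_iff]
  six x p w q y hn h1 h2 h3 h4 h5 h6 := by
    refine hno ⟨6, by decide, by omega,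
      altPath_of_list [u, x, p, w, q, y, v] 6 rfl hn rfl rfl ?_⟩
    rw [SimpleGraph.compl_adj] at h2 h4 h6
    clear hn
    intro i hi
    interval_cases i <;> simp_all [Nat.even_iff]

end

/-- Under the stability condition `(Δ − δ + 1)² ≤ 4δ(n − Δ − 1)`,
every graph in `𝒢''(d) \ 𝒢(d)`, with surplus-one node `u` and deficit-one node
`v`, contains an alternating path of even length at most `10` from `u` to `v`
starting with an edge and ending with a co-edge. -/
theorem stmt4 {n : ℕ} (d : Fin n → ℕ) (δ Δ : ℕ)
    (hdpos : ∀ v, 1 ≤ d v)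
    (hgraphical : ∃ H : SimpleGraph (Fin n), memG d H)
    (hδle : ∀ v, δ ≤ d v) (hδeq : ∃ v, d v = δ)
    (hΔle : ∀ v, d v ≤ Δ) (hΔeq : ∃ v, d v = Δ)
    (hineq : ((Δ : ℤ) - (δ : ℤ) + 1) ^ 2 ≤ 4 * (δ : ℤ) * ((n : ℤ) - (Δ : ℤ) - 1)) :
    ∀ (G : SimpleGraph (Fin n)) (u v : Fin n), u ≠ v →
      deg G u = d u + 1 → deg G v + 1 = d v →
      (∀ w, w ≠ u → w ≠ v → deg G w = d w) →
      ∃ q, Even q ∧ q ≤ 10 ∧ altPath G u v q := by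
  intro G u v huv hu hv hw
  by_contra hno
  have hδ : 1 ≤ δ := by
    obtain ⟨w, hw⟩ := hδeq
    exact hw ▸ hdpos w
  have hδΔ : δ ≤ Δ := (hδle u).trans (hΔle u)
  -- the left side of the inequality is positive, so `n - Δ - 1` is
  have hs : 1 ≤ (n : ℤ) - Δ - 1 := by
    by_contra hc
    have h1 : (1 : ℤ) ≤ ((Δ : ℤ) - δ + 1) ^ 2 := one_le_pow₀ (by omega)
    have h2 : 4 * (δ : ℤ) * ((n : ℤ) - Δ - 1) ≤ 0 :=
      mul_nonpos_of_nonneg_of_nonpos (by omega) (by omega)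
    omega
  obtain ⟨s, hs'⟩ : ∃ s : ℕ, n = s + Δ + 1 := ⟨n - Δ - 1, by omega⟩
  have hcard := fun w => card_compl_nb (G := G) w
  simp only [deg_eq_card] at hu hv hw
  refine (noPath_of_not_altPath huv hno).false (δ := δ) (s := s) (by omega) hδ ?_ ?_ ?_ ?_ ?_
  · intro w hwv
    by_cases e : w = u
    · subst e
      have := hδle w
      omega
    · rw [hw w e hwv]
      exact hδle w
  · intro w hwu
    have := hcard w
    have := hΔle w
    by_cases e : w = v
    · subst e
      omega
    · have := hw w hwu e
      omega
  · have := hδle u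
    omega
  · have := hcard v
    have := hΔle v
    omega
  · have e1 : (n : ℤ) - δ - s = (Δ : ℤ) - δ + 1 := by omega
    have e2 : (n : ℤ) - Δ - 1 = s := by omega
    rw [e1, ← e2]
    exact hineq
end
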